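/- Let 𝔽_{3,2} denote the 3-graph with vertex set {1,…,5} and edge set {123, 124, 125, 345}. There exist constants N_0 and c > 0 such that for all integers n ≥ N_0 and all integers t with 0 ≤ t ≤ c·n, one has EX(n,(t+1)𝔽_{3,2}) = { K_t^3 ⋈ S_3(n−t) }. -/

import Mathlib

open Filter

namespace DensityCH

/-- An `r`-uniform hypergraph with vertices in `ℕ`:
a finite vertex set together with a set of `r`-element edges. -/
structure HGraph (r : ℕ) where
  verts : Finset ℕ
  edges : Finset (Finset ℕ)
  edges_sub : ∀ e ∈ edges, e ⊆ verts
  edges_card : ∀ e ∈ edges, e.card = r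

namespace HGraph

/-- Build an `r`-graph from a vertex set and a set of candidate edges,
keeping exactly the well-formed candidates. -/
def ofEdges (r : ℕ) (V : Finset ℕ) (E : Finset (Finset ℕ)) : HGraph r where
  verts := V
  edges := E.filter fun e => e ⊆ V ∧ e.card = r
  edges_sub := fun e he => ((Finset.mem_filter.mp he).2).1
  edges_card := fun e he => ((Finset.mem_filter.mp he).2).2

variable {r : ℕ}

/-- `H` contains a copy of `F`, i.e. a subgraph isomorphic to `F`. -/
def IsCopyIn (F H : HGraph r) : Prop :=
  ∃ f : ℕ → ℕ, Set.InjOn f ↑F.verts ∧ (∀ v ∈ F.verts, f v ∈ H.verts) ∧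
    ∀ e ∈ F.edges, e.image f ∈ H.edges

/-- The subgraph of `H` induced on `S`. -/
def induce (H : HGraph r) (S : Finset ℕ) : HGraph r :=
  ofEdges r (H.verts ∩ S) (H.edges.filter fun e => e ⊆ S)

/-- Delete a vertex from `H`. -/
def deleteVert (H : HGraph r) (v : ℕ) : HGraph r :=
  ofEdges r (H.verts.erase v) (H.edges.filter fun e => v ∉ e)

/-- The degree of a vertex. -/
def deg (H : HGraph r) (v : ℕ) : ℕ := (H.edges.filter fun e => v ∈ e).card

/-- The maximum degree `Δ(H)`. -/
def maxDeg (H : HGraph r) : ℕ := H.verts.sup H.deg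

/-- The minimum degree `δ(H)`. -/
def minDeg (H : HGraph r) : ℕ :=
  if h : H.verts.Nonempty then H.verts.inf' h H.deg else 0

/-- The average degree `d(H) = r·|E(H)|/|V(H)|`. -/
noncomputable def avgDeg (H : HGraph r) : ℝ :=
  (r : ℝ) * (H.edges.card : ℝ) / (H.verts.card : ℝ)

/-- `H` contains `k` pairwise vertex-disjoint copies of `F`, i.e. `ν(F,H) ≥ k`. -/
def HasMatching (F H : HGraph r) (k : ℕ) : Prop :=
  ∃ S : Fin k → Finset ℕ,
    (∀ i, S i ⊆ H.verts ∧ (S i).card = F.verts.card) ∧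
    (∀ i j, i ≠ j → Disjoint (S i) (S j)) ∧
    ∀ i, F.IsCopyIn (H.induce (S i))

/-- Isomorphism of hypergraphs. -/
def Iso (G H : HGraph r) : Prop :=
  ∃ f : ℕ → ℕ, Set.BijOn f ↑G.verts ↑H.verts ∧
    ∀ e ∈ Finset.powersetCard r G.verts, (e ∈ G.edges ↔ e.image f ∈ H.edges)

/-- The join `G ⋈ H`: all edges of `G`, all edges of `H`, and all `r`-sets meeting
both vertex sets. -/
def join (G H : HGraph r) : HGraph r :=
  ofEdges r (G.verts ∪ H.verts)
    (G.edges ∪ H.edges ∪ ((Finset.powersetCard r (G.verts ∪ H.verts)).filter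
      fun e => (e ∩ G.verts).Nonempty ∧ (e ∩ H.verts).Nonempty))

end HGraph

/-- The complete `r`-graph on a vertex set `S`. -/
def completeOn (r : ℕ) (S : Finset ℕ) : HGraph r :=
  HGraph.ofEdges r S (Finset.powersetCard r S)

/-- The `r`-graph on `V` with no edges. -/
def emptyOn (r : ℕ) (V : Finset ℕ) : HGraph r := HGraph.ofEdges r V ∅

/-- The Turán number `ex(n,F)`. -/
noncomputable def exN (r n : ℕ) (F : HGraph r) : ℕ :=
  sSup {m | ∃ H : HGraph r, H.verts.card = n ∧ ¬ F.IsCopyIn H ∧ H.edges.card = m}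

/-- `d(n,F) = r·ex(n,F)/n`. -/
noncomputable def dN (r n : ℕ) (F : HGraph r) : ℝ := (r : ℝ) * (exN r n F : ℝ) / (n : ℝ)

/-- `δ(n,F) = ex(n,F) − ex(n−1,F)` (as a real number). -/
noncomputable def deltaN (r n : ℕ) (F : HGraph r) : ℝ := (exN r n F : ℝ) - (exN r (n-1) F : ℝ)

/-- `x` is the Turán density `π(F)`, i.e. the limit of `ex(n,F)/C(n,r)`. -/
def HasTuranDensity (r : ℕ) (F : HGraph r) (x : ℝ) : Prop :=
  Tendsto (fun n : ℕ => (exN r n F : ℝ) / (n.choose r : ℝ)) atTop (nhds x)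

/-- `ex(n,(t+1)F)`: the maximum number of edges of an `n`-vertex `r`-graph with no
`t+1` pairwise vertex-disjoint copies of `F`. -/
noncomputable def exMatchN (r n t : ℕ) (F : HGraph r) : ℕ :=
  sSup {m | ∃ H : HGraph r, H.verts.card = n ∧ ¬ F.HasMatching H (t+1) ∧ H.edges.card = m}

/-- `H ∈ EX(n,F)`. -/
def IsExtremalFree (r n : ℕ) (F H : HGraph r) : Prop :=
  H.verts.card = n ∧ ¬ F.IsCopyIn H ∧ H.edges.card = exN r n F

/-- `H ∈ EX(n,(t+1)F)`. -/
def IsExtremalMatchingFree (r n t : ℕ) (F H : HGraph r) : Prop :=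
  H.verts.card = n ∧ ¬ F.HasMatching H (t+1) ∧ H.edges.card = exMatchN r n t F

/-- `F` is `(f1, f2)`-bounded at `n`. -/
def BoundedAt (r n : ℕ) (F : HGraph r) (f1 f2 : ℝ) : Prop :=
  ∀ H : HGraph r, H.verts.card = n → ¬ F.IsCopyIn H →
    dN r n F - f1 ≤ H.avgDeg → (H.maxDeg : ℝ) ≤ dN r n F + f2

/-- `ex(·,F)` is `g`-smooth at `n`: `|δ(n,F) − d(n−1,F)| ≤ g(n)`. -/
def SmoothAt (r n : ℕ) (F : HGraph r) (g : ℝ) : Prop :=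
  |deltaN r n F - dN r (n-1) F| ≤ g

/-- The collection `H 0, …, H t` (on a common vertex set) has a rainbow `F`-matching. -/
def HasRainbowMatching (r t : ℕ) (F : HGraph r) (H : Fin (t+1) → HGraph r) : Prop :=
  ∃ S : Fin (t+1) → Finset ℕ,
    (∀ i, S i ⊆ (H i).verts ∧ (S i).card = F.verts.card) ∧
    (∀ i j, i ≠ j → Disjoint (S i) (S j)) ∧
    ∀ i, F.IsCopyIn ((H i).induce (S i))

/-!  Patterns -/

/-- An `r`-uniform pattern: a finite index set together with a collection of
`r`-multisets on it. -/
structure Pattern (r : ℕ) where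
  idx : Finset ℕ
  mE : Finset (Multiset ℕ)
  card_eq : ∀ s ∈ mE, Multiset.card s = r
  mem_idx : ∀ s ∈ mE, ∀ i ∈ s, i ∈ idx

namespace Pattern

variable {r : ℕ}

/-- The pattern `P − i`. -/
def erase (P : Pattern r) (i : ℕ) : Pattern r where
  idx := P.idx.erase i
  mE := P.mE.filter fun s => i ∉ s
  card_eq := fun s hs => P.card_eq s (Finset.mem_filter.mp hs).1
  mem_idx := by
    intro s hs j hj
    have h1 := Finset.mem_filter.mp hs
    refine Finset.mem_erase.mpr ⟨?_, P.mem_idx s h1.1 j hj⟩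
    rintro rfl
    exact h1.2 hj

/-- `H` is a `P`-construction: a blowup of the pattern `P`. -/
def IsConstruction (P : Pattern r) (H : HGraph r) : Prop :=
  ∃ part : ℕ → ℕ, (∀ v ∈ H.verts, part v ∈ P.idx) ∧
    ∀ e : Finset ℕ, e ∈ H.edges ↔ (e ⊆ H.verts ∧ e.card = r ∧ Multiset.map part e.val ∈ P.mE)

/-- `H` is a `P`-subconstruction: a subgraph of a `P`-construction. -/
def IsSubconstruction (P : Pattern r) (H : HGraph r) : Prop :=
  ∃ G : HGraph r, P.IsConstruction G ∧ H.verts ⊆ G.verts ∧ H.edges ⊆ G.edges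

end Pattern

/-- `Λ(P,n)`: the maximum number of edges of an `n`-vertex `P`-construction. -/
noncomputable def patEx (r : ℕ) (P : Pattern r) (n : ℕ) : ℕ :=
  sSup {m | ∃ H : HGraph r, P.IsConstruction H ∧ H.verts.card = n ∧ H.edges.card = m}

/-- The Lagrangian `λ(P) = lim Λ(P,n)/C(n,r)`. -/
noncomputable def patLagrangian (r : ℕ) (P : Pattern r) : ℝ :=
  limUnder atTop fun n : ℕ => (patEx r P n : ℝ) / (n.choose r : ℝ)

/-- The pattern `P` is minimal: `λ(P−i) < λ(P)` for all `i`. -/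
def Pattern.Minimal {r : ℕ} (P : Pattern r) : Prop :=
  ∀ i ∈ P.idx, patLagrangian r (P.erase i) < patLagrangian r P

/-- `(F,P)` is a Turán pair. -/
def IsTuranPair (r : ℕ) (F : HGraph r) (P : Pattern r) : Prop :=
  (∀ H : HGraph r, P.IsConstruction H → ¬ F.IsCopyIn H) ∧
  (∀ H : HGraph r, ¬ F.IsCopyIn H → H.edges.card = exN r H.verts.card F →
    P.IsConstruction H)

/-- `F` is edge-stable with respect to `P` (with Turán density `π`). -/
def EdgeStable (r : ℕ) (F : HGraph r) (P : Pattern r) (π : ℝ) : Prop :=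
  ∀ δ : ℝ, 0 < δ → ∃ N₀ : ℕ, ∃ ζ : ℝ, 0 < ζ ∧
    ∀ H : HGraph r, N₀ ≤ H.verts.card → ¬ F.IsCopyIn H →
      (π - ζ) * (H.verts.card.choose r : ℝ) ≤ (H.edges.card : ℝ) →
      ∃ H' : HGraph r, H'.verts ⊆ H.verts ∧ H'.edges ⊆ H.edges ∧
        (π - δ) * (H.verts.card.choose r : ℝ) ≤ (H'.edges.card : ℝ) ∧
        P.IsSubconstruction H'

/-- `F` is weakly vertex-extendable with respect to `P` (with Turán density `π`). -/
def WeaklyVertexExtendable (r : ℕ) (F : HGraph r) (P : Pattern r) (π : ℝ) : Prop :=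
  ∀ δ : ℝ, 0 < δ → ∃ N₀ : ℕ, ∃ ζ : ℝ, 0 < ζ ∧
    ∀ H : HGraph r, N₀ ≤ H.verts.card → ¬ F.IsCopyIn H →
      (π - ζ) * (((H.verts.card - 1).choose (r-1) : ℕ) : ℝ) ≤ (H.minDeg : ℝ) →
      ∀ v ∈ H.verts, P.IsSubconstruction (H.deleteVert v) →
        (H.deg v : ℝ) ≤ (π + δ) * (((H.verts.card - 1).choose (r-1) : ℕ) : ℝ)

/-- `F` is degree-stable with respect to `P` (with Turán density `π`). -/
def DegreeStable (r : ℕ) (F : HGraph r) (P : Pattern r) (π : ℝ) : Prop :=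
  ∃ ζ : ℝ, 0 < ζ ∧ ∃ N₀ : ℕ,
    ∀ H : HGraph r, N₀ ≤ H.verts.card → ¬ F.IsCopyIn H →
      (π - ζ) * (((H.verts.card - 1).choose (r-1) : ℕ) : ℝ) ≤ (H.minDeg : ℝ) →
      P.IsSubconstruction H

/-!  Concrete constructions -/

/-- The generalized Turán graph `T_r(·,ℓ)` on vertex set `V` (parts are residue
classes mod `ℓ`; on an interval these are balanced). -/
def turanOn (r ℓ : ℕ) (V : Finset ℕ) : HGraph r :=
  HGraph.ofEdges r V ((Finset.powersetCard r V).filter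
    fun e => ∀ u ∈ e, ∀ v ∈ e, u % ℓ = v % ℓ → u = v)

/-- The `r`-graph on `V₁ ∪ V₂` whose edges are all `r`-sets meeting both parts. -/
def crossOn (r : ℕ) (V₁ V₂ : Finset ℕ) : HGraph r :=
  HGraph.ofEdges r (V₁ ∪ V₂) ((Finset.powersetCard r (V₁ ∪ V₂)).filter
    fun e => (e ∩ V₁).Nonempty ∧ (e ∩ V₂).Nonempty)

/-- The `r`-graph on `V₁ ∪ V₂` whose edges are all `r`-sets meeting `V₁` in an odd
number of vertices. -/
def oddCross (r : ℕ) (V₁ V₂ : Finset ℕ) : HGraph r :=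
  HGraph.ofEdges r (V₁ ∪ V₂) ((Finset.powersetCard r (V₁ ∪ V₂)).filter
    fun e => Odd (e ∩ V₁).card)

/-- The Fano plane. -/
def fano : HGraph 3 :=
  HGraph.ofEdges 3 (Finset.Icc 1 7)
    {({1,2,3} : Finset ℕ), {3,4,5}, {5,6,1}, {1,7,4}, {2,7,5}, {3,7,6}, {2,4,6}}

/-- The generalized triangle `𝕋_r`, with edges `{1,…,r}`, `{1,…,r−1,r+1}` and
`{r,…,2r−1}`. -/
def genTri (r : ℕ) : HGraph r :=
  HGraph.ofEdges r (Finset.Icc 1 (2*r - 1))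
    {Finset.Icc 1 r, Finset.Icc 1 (r-1) ∪ {r+1}, Finset.Icc r (2*r - 1)}

/-- `G` is a blowup of the `r`-graph `W` (viewing `W` as a pattern). -/
def IsBlowupOf {r : ℕ} (W G : HGraph r) : Prop :=
  ∃ part : ℕ → ℕ, (∀ v ∈ G.verts, part v ∈ W.verts) ∧
    ∀ e : Finset ℕ, e ∈ G.edges ↔
      (e ⊆ G.verts ∧ e.card = r ∧ ∃ f ∈ W.edges, Multiset.map part e.val = f.val)

/-- The expansion `H^F` of an `r`-graph `F`: for every pair of vertices not covered
by an edge of `F`, add an edge consisting of this pair plus `r−2` new vertices,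
these sets of new vertices being pairwise disjoint. -/
def HGraph.expansion {r : ℕ} (F : HGraph r) : HGraph r :=
  HGraph.ofEdges r
    (F.verts ∪ (((F.verts ×ˢ F.verts).filter fun p =>
        p.1 < p.2 ∧ ∀ e ∈ F.edges, ¬ (p.1 ∈ e ∧ p.2 ∈ e)).biUnion fun p =>
      (Finset.range (r-2)).image fun s =>
        (F.verts.sup id + 1) + (p.1 * (F.verts.sup id + 1) + p.2) * r + s))
    (F.edges ∪ (((F.verts ×ˢ F.verts).filter fun p =>
        p.1 < p.2 ∧ ∀ e ∈ F.edges, ¬ (p.1 ∈ e ∧ p.2 ∈ e)).image fun p =>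
      insert p.1 (insert p.2 ((Finset.range (r-2)).image fun s =>
        (F.verts.sup id + 1) + (p.1 * (F.verts.sup id + 1) + p.2) * r + s))))

/-- A `2`-graph is a tree on `k` vertices: `k` vertices, `k−1` edges, connected. -/
def IsTreeGraph (k : ℕ) (T : HGraph 2) : Prop :=
  T.verts.card = k ∧ T.edges.card = k - 1 ∧
  ∀ S : Finset ℕ, S ⊆ T.verts → S.Nonempty → S ≠ T.verts →
    ∃ e ∈ T.edges, (e ∩ S).Nonempty ∧ (e \ S).Nonempty

/-- `T` satisfies the Erdős–Sós property for `k`: every graph with average degree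
greater than `k−2` contains `T`. -/
def ErdosSos (k : ℕ) (T : HGraph 2) : Prop :=
  ∀ G : HGraph 2, ((k : ℝ) - 2) * (G.verts.card : ℝ) < 2 * (G.edges.card : ℝ) →
    T.IsCopyIn G

/-- The `(r−2)`-expansion `Exp(T)` of a `2`-graph `T`: enlarge every edge by one
common fixed set of `r−2` new vertices. -/
def expTree (r : ℕ) (T : HGraph 2) : HGraph r :=
  HGraph.ofEdges r
    (T.verts ∪ ((Finset.range (r-2)).image fun s => T.verts.sup id + 1 + s))
    (T.edges.image fun e =>
      e ∪ ((Finset.range (r-2)).image fun s => T.verts.sup id + 1 + s))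

/-- The chromatic number of a `2`-graph. -/
noncomputable def chrom (F : HGraph 2) : ℕ :=
  sInf {k | ∃ c : ℕ → ℕ, (∀ v ∈ F.verts, c v < k) ∧
    ∀ e ∈ F.edges, ∀ u ∈ e, ∀ v ∈ e, u ≠ v → c u ≠ c v}

/-- A graph is edge-critical if deleting some edge lowers its chromatic number. -/
def EdgeCritical (F : HGraph 2) : Prop :=
  ∃ e ∈ F.edges, chrom (HGraph.ofEdges 2 F.verts (F.edges.erase e)) < chrom F

/-- `H` is semibipartite: the vertex set splits into `V₁ ∪ V₂` so that every edge
has exactly one vertex in `V₁`. -/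
def Semibipartite (r : ℕ) (H : HGraph r) : Prop :=
  ∃ V₁ ⊆ H.verts, ∀ e ∈ H.edges, (e ∩ V₁).card = 1

/-- `H` is a `K_ℓ^r`-subconstruction, i.e. an `ℓ`-partite `r`-graph. -/
def IsKlSub (r ℓ : ℕ) (H : HGraph r) : Prop :=
  ∃ f : ℕ → ℕ, (∀ v ∈ H.verts, f v < ℓ) ∧
    ∀ e ∈ H.edges, ∀ u ∈ e, ∀ v ∈ e, f u = f v → u = v

/-- The Lagrangian `λ(W)` of an `r`-graph `W`, viewing `W` as a pattern. -/
noncomputable def hgLagrangian (r : ℕ) (W : HGraph r) : ℝ :=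
  limUnder atTop fun n : ℕ =>
    ((sSup {m | ∃ G : HGraph r, IsBlowupOf W G ∧ G.verts.card = n ∧ G.edges.card = m} : ℕ) : ℝ)
      / (n.choose r : ℝ)

/-- The `r`-graph `B(r,ℓ+1)`. -/
def BGraph (r ℓ : ℕ) : HGraph r :=
  HGraph.ofEdges r (Finset.Icc 1 (ℓ+1))
    (insert (Finset.Icc 1 r)
      ((Finset.powersetCard r (Finset.Icc 2 (ℓ+1))).filter
        fun e => (e ∩ Finset.Icc 2 r).card ≤ 1))

/-- The `r`-uniform matching of size two, `M_2^r`. -/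
def matching2 (r : ℕ) : HGraph r :=
  HGraph.ofEdges r (Finset.Icc 1 (2*r)) {Finset.Icc 1 r, Finset.Icc (r+1) (2*r)}

/-- The expanded triangle `𝓒_3^{2r}`. -/
def expandedTriangle (r : ℕ) : HGraph (2*r) :=
  HGraph.ofEdges (2*r) (Finset.Icc 1 (3*r))
    {Finset.Icc 1 (2*r), Finset.Icc (r+1) (3*r), Finset.Icc 1 r ∪ Finset.Icc (2*r+1) (3*r)}

/-- The `4`-graph `𝔽_{4,3}`. -/
def F43 : HGraph 4 :=
  HGraph.ofEdges 4 (Finset.Icc 1 7)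
    {({1,2,3,4} : Finset ℕ), {1,2,3,5}, {1,2,3,6}, {1,2,3,7}, {4,5,6,7}}

/-- The `3`-graph `𝔽_{3,2}`. -/
def F32 : HGraph 3 :=
  HGraph.ofEdges 3 (Finset.Icc 1 5)
    {({1,2,3} : Finset ℕ), {1,2,4}, {1,2,5}, {3,4,5}}

/-- `H` contains pairwise vertex-disjoint copies of `F i`, `ts i` many of each. -/
def HasMixedMatching (r k : ℕ) (F : Fin k → HGraph r) (ts : Fin k → ℕ)
    (H : HGraph r) : Prop :=
  ∃ S : (i : Fin k) → Fin (ts i) → Finset ℕ,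
    (∀ i j, S i j ⊆ H.verts ∧ (S i j).card = (F i).verts.card) ∧
    (∀ p q : Σ i : Fin k, Fin (ts i), p ≠ q → Disjoint (S p.1 p.2) (S q.1 q.2)) ∧
    ∀ i j, (F i).IsCopyIn (H.induce (S i j))

/-- `ex(n, ⊔ᵢ tᵢ Fᵢ)`. -/
noncomputable def exMixedN (r k : ℕ) (F : Fin k → HGraph r) (ts : Fin k → ℕ)
    (n : ℕ) : ℕ :=
  sSup {m | ∃ H : HGraph r, H.verts.card = n ∧ ¬ HasMixedMatching r k F ts H ∧
    H.edges.card = m}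

/-- `ex(n, {F₁,…,F_k})`. -/
noncomputable def exFamN (r k : ℕ) (F : Fin k → HGraph r) (n : ℕ) : ℕ :=
  sSup {m | ∃ H : HGraph r, H.verts.card = n ∧ (∀ i, ¬ (F i).IsCopyIn H) ∧
    H.edges.card = m}

/-! In an `𝔽_{3,2}`-free 3-graph the neighbourhood of every pair is independent. Let `S` be an
independent set of maximum weight `α`, with respect to vertex weights of total `1`. Every codegree
is then at most `α`, and any pair lies in the links of at most two vertices of an edge; averaging a
quadratic inequality for the links over the vertices outside `S` bounds the density essentially by
`3 (1 - α) α²`, whose maximum is `4/9`, at `α = 2/3`. Near equality almost all triples with exactly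
one vertex outside `S` are edges. If moreover all degrees are large, then moving every vertex to
the side its link indicates makes both parts independent; an edge with two vertices in the smaller
part contains a pair of small codegree, so that a count of the edges by codegrees is maximal only
for semibipartite graphs. Deleting vertices of low degree reduces the Turán problem to this case.

Suppose that there are no `t + 1` disjoint copies. At most `5 t` vertices meet all copies, and
without them the Turán bound holds. So if all degrees were at most `0.26 n²`, there would be fewer
edges than in `K_t^3 ⋈ S_3(n - t)`, whose `t` universal vertices have degree about `n² / 2`. On the
other hand the Lagrangian bound forces all degrees in an `𝔽_{3,2}`-free graph with nearly `2/27 n³`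
edges to be close to `2/9 n²`. A vertex of degree above `0.26 n²` therefore lies in a copy that
avoids any `5 t` other prescribed vertices, its deletion leaves no `t` disjoint copies, and
induction on `t` applies. -/

/-! ### Weighted triple systems -/

/-- A 3-graph on an arbitrary type, encoded as a symmetric ternary relation without repeated
entries. The density part of the argument is carried out for vertex-weighted triple systems. -/
structure TripleSystem (V : Type*) where
  Adj : V → V → V → Prop
  swap_left : ∀ {x y z}, Adj x y z → Adj y x z
  swap_right : ∀ {x y z}, Adj x y z → Adj x z y
  ne : ∀ {x y z}, Adj x y z → x ≠ y

namespace TripleSystem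

open Finset

variable {V : Type*} (T : TripleSystem V)

/-- `𝔽_{3,2}`-freeness: no edge lies inside the neighbourhood of a pair. The third vertices
`a`, `b`, `c` of the edges through the pair `x`, `y` play the roles of `3`, `4`, `5`. -/
def F32Free : Prop := ∀ x y a b c, T.Adj x y a → T.Adj x y b → T.Adj x y c → ¬ T.Adj a b c

/-- `S` is independent if it spans no edge. -/
def IsIndep (S : Finset V) : Prop := ∀ a ∈ S, ∀ b ∈ S, ∀ c ∈ S, ¬ T.Adj a b c

open Classical in
/-- The indicator function of the edge relation. -/
noncomputable def ind (x y z : V) : ℝ := if T.Adj x y z then 1 else 0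

/-- The `p`-weight of the codegree of `x` and `y` into `P`. -/
noncomputable def codegWeight (p : V → ℝ) (x y : V) (P : Finset V) : ℝ :=
  ∑ z ∈ P, p z * T.ind x y z

/-- The `p`-weight of the link of `v` between `P` and `Q`. Pairs are ordered: an edge of the link
inside `P ∩ Q` is counted twice. -/
noncomputable def linkWeight (p : V → ℝ) (v : V) (P Q : Finset V) : ℝ :=
  ∑ x ∈ P, ∑ y ∈ Q, p x * p y * T.ind v x y

/-- The `p`-weight of the edges in `P × Q × R`. Triples are ordered, so that
`weight p univ univ univ` is six times the value of the Lagrangian polynomial at `p`. -/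
noncomputable def weight (p : V → ℝ) (P Q R : Finset V) : ℝ := ∑ x ∈ P, p x * T.linkWeight p x Q R

variable {T} {p : V → ℝ}

lemma swap_left_iff {x y z : V} : T.Adj x y z ↔ T.Adj y x z := ⟨T.swap_left, T.swap_left⟩

lemma swap_right_iff {x y z : V} : T.Adj x y z ↔ T.Adj x z y := ⟨T.swap_right, T.swap_right⟩

lemma rotate {x y z : V} (h : T.Adj x y z) : T.Adj y z x := T.swap_right (T.swap_left h)

lemma ind_of_adj {x y z : V} (h : T.Adj x y z) : T.ind x y z = 1 := by rw [ind, if_pos h]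

lemma ind_of_not_adj {x y z : V} (h : ¬ T.Adj x y z) : T.ind x y z = 0 := by rw [ind, if_neg h]

lemma ind_nonneg (x y z : V) : 0 ≤ T.ind x y z := by unfold ind; split_ifs <;> norm_num

lemma ind_le_one (x y z : V) : T.ind x y z ≤ 1 := by unfold ind; split_ifs <;> norm_num

lemma ind_swap_left (x y z : V) : T.ind x y z = T.ind y x z := by
  classical exact if_congr swap_left_iff rfl rfl

lemma ind_swap_right (x y z : V) : T.ind x y z = T.ind x z y := by
  classical exact if_congr swap_right_iff rfl rfl

lemma codegWeight_nonneg (hp : ∀ v, 0 ≤ p v) (x y : V) (P : Finset V) :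
    0 ≤ T.codegWeight p x y P :=
  sum_nonneg fun z _ => mul_nonneg (hp z) (ind_nonneg _ _ _)

lemma codegWeight_le (hp : ∀ v, 0 ≤ p v) (x y : V) (P : Finset V) :
    T.codegWeight p x y P ≤ ∑ z ∈ P, p z :=
  sum_le_sum fun z _ => mul_le_of_le_one_right (hp z) (ind_le_one _ _ _)

lemma linkWeight_eq_sum_codegWeight (v : V) (P Q : Finset V) :
    T.linkWeight p v P Q = ∑ x ∈ P, p x * T.codegWeight p v x Q :=
  sum_congr rfl fun x _ => by simp only [codegWeight, mul_sum, mul_assoc]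

lemma linkWeight_nonneg (hp : ∀ v, 0 ≤ p v) (v : V) (P Q : Finset V) :
    0 ≤ T.linkWeight p v P Q :=
  sum_nonneg fun x _ => sum_nonneg fun y _ =>
    mul_nonneg (mul_nonneg (hp x) (hp y)) (ind_nonneg _ _ _)

lemma linkWeight_le (hp : ∀ v, 0 ≤ p v) (v : V) (P Q : Finset V) :
    T.linkWeight p v P Q ≤ (∑ x ∈ P, p x) * ∑ x ∈ Q, p x := by
  rw [sum_mul_sum]
  exact sum_le_sum fun x _ => sum_le_sum fun y _ =>
    mul_le_of_le_one_right (mul_nonneg (hp x) (hp y)) (ind_le_one _ _ _)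

lemma linkWeight_comm (v : V) (P Q : Finset V) : T.linkWeight p v P Q = T.linkWeight p v Q P := by
  unfold linkWeight
  rw [sum_comm]
  exact sum_congr rfl fun x _ => sum_congr rfl fun y _ => by rw [ind_swap_right, mul_comm (p y)]

lemma linkWeight_mono (hp : ∀ v, 0 ≤ p v) (v : V) {P Q P' Q' : Finset V} (hP : P ⊆ P')
    (hQ : Q ⊆ Q') : T.linkWeight p v P Q ≤ T.linkWeight p v P' Q' := by
  have hnonneg (x y : V) : 0 ≤ p x * p y * T.ind v x y :=
    mul_nonneg (mul_nonneg (hp x) (hp y)) (ind_nonneg _ _ _)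
  exact (sum_le_sum fun x _ => sum_le_sum_of_subset_of_nonneg hQ fun y _ _ => hnonneg x y).trans
    (sum_le_sum_of_subset_of_nonneg hP fun x _ _ => sum_nonneg fun y _ => hnonneg x y)

lemma weight_eq_sum (P Q R : Finset V) :
    T.weight p P Q R = ∑ x ∈ P, ∑ y ∈ Q, ∑ z ∈ R, p x * p y * p z * T.ind x y z := by
  simp only [weight, linkWeight, mul_sum, mul_assoc]

lemma weight_swap_left (P Q R : Finset V) : T.weight p P Q R = T.weight p Q P R := by
  rw [weight_eq_sum, weight_eq_sum, sum_comm]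
  refine sum_congr rfl fun x _ => sum_congr rfl fun y _ => sum_congr rfl fun z _ => ?_
  rw [ind_swap_left, mul_comm (p y)]

lemma weight_swap_right (P Q R : Finset V) : T.weight p P Q R = T.weight p P R Q :=
  sum_congr rfl fun x _ => by rw [linkWeight_comm]

lemma IsIndep.weight_eq_zero {S : Finset V} (h : T.IsIndep S) : T.weight p S S S = 0 := by
  rw [weight_eq_sum]
  refine sum_eq_zero fun x hx => sum_eq_zero fun y hy => sum_eq_zero fun z hz => ?_
  rw [ind_of_not_adj (h x hx y hy z hz), mul_zero]

/-! ### Consequences of `𝔽_{3,2}`-freeness -/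

open Classical in
lemma F32Free.isIndep_neighbors [Fintype V] (hT : T.F32Free) (x y : V) :
    T.IsIndep {z | T.Adj x y z} := by
  intro a ha b hb c hc
  exact hT x y a b c (by simpa using ha) (by simpa using hb) (by simpa using hc)

open Classical in
lemma codegWeight_univ [Fintype V] (x y : V) :
    T.codegWeight p x y univ = ∑ z with T.Adj x y z, p z := by
  simp only [codegWeight, ind, sum_filter, mul_ite, mul_one, mul_zero]

lemma F32Free.ind_add_ind_add_ind_le (hT : T.F32Free) {a b c : V} (h : T.Adj a b c) (x y : V) :
    T.ind a x y + T.ind b x y + T.ind c x y ≤ 2 := by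
  by_contra! hlt
  have hadj {v : V} (hv : T.ind v x y ≠ 0) : T.Adj x y v := by
    contrapose! hv
    exact ind_of_not_adj fun h => hv (rotate h)
  have ha := T.ind_le_one a x y
  have hb := T.ind_le_one b x y
  have hc := T.ind_le_one c x y
  refine hT x y a b c (hadj ?_) (hadj ?_) (hadj ?_) h <;> intro h0 <;> linarith

lemma F32Free.linkWeight_add_le (hT : T.F32Free) (hp : ∀ v, 0 ≤ p v) {a b c : V}
    (h : T.Adj a b c) (P Q : Finset V) :
    T.linkWeight p a P Q + T.linkWeight p b P Q + T.linkWeight p c P Q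
      ≤ 2 * ((∑ x ∈ P, p x) * ∑ x ∈ Q, p x) := by
  rw [sum_mul_sum]
  simp only [linkWeight, mul_sum, ← sum_add_distrib]
  refine sum_le_sum fun x _ => sum_le_sum fun y _ => ?_
  calc _ = p x * p y * (T.ind a x y + T.ind b x y + T.ind c x y) := by ring
    _ ≤ p x * p y * 2 := mul_le_mul_of_nonneg_left (hT.ind_add_ind_add_ind_le h x y)
        (mul_nonneg (hp x) (hp y))
    _ = 2 * (p x * p y) := mul_comm _ _

lemma three_mul_sum_mul_linkWeight (q : V → ℝ) (R : Finset V) :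
    3 * ∑ r ∈ R, q r * T.linkWeight p r R R
      = ∑ x ∈ R, ∑ y ∈ R, ∑ z ∈ R,
          (q x * p y * p z + p x * q y * p z + p x * p y * q z) * T.ind x y z := by
  have first : ∑ r ∈ R, q r * T.linkWeight p r R R
      = ∑ x ∈ R, ∑ y ∈ R, ∑ z ∈ R, q x * p y * p z * T.ind x y z := by
    simp only [linkWeight, mul_sum, mul_assoc]
  have second : ∑ x ∈ R, ∑ y ∈ R, ∑ z ∈ R, q x * p y * p z * T.ind x y z
      = ∑ x ∈ R, ∑ y ∈ R, ∑ z ∈ R, p x * q y * p z * T.ind x y z := by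
    rw [sum_comm]
    refine sum_congr rfl fun x _ => sum_congr rfl fun y _ => sum_congr rfl fun z _ => ?_
    rw [ind_swap_left, mul_comm (q y)]
  have third : ∑ x ∈ R, ∑ y ∈ R, ∑ z ∈ R, p x * q y * p z * T.ind x y z
      = ∑ x ∈ R, ∑ y ∈ R, ∑ z ∈ R, p x * p y * q z * T.ind x y z := by
    refine sum_congr rfl fun x _ => ?_
    rw [sum_comm]
    refine sum_congr rfl fun y _ => sum_congr rfl fun z _ => ?_
    rw [ind_swap_right, mul_right_comm (p x)]
  simp only [add_mul, sum_add_distrib, ← third, ← second, ← first]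
  ring

/-- Average `linkWeight_add_le` for the links inside `S` over the edges inside `R`. -/
lemma F32Free.sum_linkWeight_mul_linkWeight_le (hT : T.F32Free) (hp : ∀ v, 0 ≤ p v)
    (S R : Finset V) :
    3 * ∑ r ∈ R, p r * T.linkWeight p r S S * T.linkWeight p r R R
      ≤ 2 * (∑ x ∈ S, p x) ^ 2 * T.weight p R R R := by
  rw [three_mul_sum_mul_linkWeight (fun r => p r * T.linkWeight p r S S), weight_eq_sum]
  simp only [mul_sum]
  refine sum_le_sum fun x _ => sum_le_sum fun y _ => sum_le_sum fun z _ => ?_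
  by_cases h : T.Adj x y z
  · have hlink := mul_le_mul_of_nonneg_left (hT.linkWeight_add_le hp h S S)
      (mul_nonneg (mul_nonneg (hp x) (hp y)) (hp z))
    rw [ind_of_adj h]
    linarith
  · simp only [ind_of_not_adj h, mul_zero, le_refl]

/-! ### Splitting the vertex set -/

section Split

variable [Fintype V] [DecidableEq V]

lemma codegWeight_split (S : Finset V) (x y : V) :
    T.codegWeight p x y univ = T.codegWeight p x y S + T.codegWeight p x y Sᶜ :=
  (sum_add_sum_compl S _).symm

lemma linkWeight_split_left (S Q : Finset V) (v : V) :
    T.linkWeight p v univ Q = T.linkWeight p v S Q + T.linkWeight p v Sᶜ Q :=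
  (sum_add_sum_compl S _).symm

lemma linkWeight_split (S : Finset V) (v : V) :
    T.linkWeight p v univ univ
      = T.linkWeight p v S S + 2 * T.linkWeight p v S Sᶜ + T.linkWeight p v Sᶜ Sᶜ := by
  rw [linkWeight_split_left S, linkWeight_comm v S, linkWeight_comm v Sᶜ, linkWeight_split_left S,
    linkWeight_split_left S, linkWeight_comm v Sᶜ S]
  ring

lemma weight_split (S : Finset V) :
    T.weight p univ univ univ
      = T.weight p S S S + 3 * T.weight p Sᶜ S S + 3 * T.weight p Sᶜ S Sᶜ
        + T.weight p Sᶜ Sᶜ Sᶜ := by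
  have hsplit (P : Finset V) : ∑ x ∈ P, p x * T.linkWeight p x univ univ
      = T.weight p P S S + 2 * T.weight p P S Sᶜ + T.weight p P Sᶜ Sᶜ := by
    unfold weight
    rw [mul_sum, ← sum_add_distrib, ← sum_add_distrib]
    exact sum_congr rfl fun x _ => by rw [linkWeight_split S]; ring
  have hSSc : T.weight p S S Sᶜ = T.weight p Sᶜ S S := by rw [weight_swap_right, weight_swap_left]
  have hScS : T.weight p S Sᶜ Sᶜ = T.weight p Sᶜ S Sᶜ := weight_swap_left _ _ _
  have huniv : T.weight p univ univ univ = ∑ x ∈ S, p x * T.linkWeight p x univ univ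
      + ∑ x ∈ Sᶜ, p x * T.linkWeight p x univ univ := (sum_add_sum_compl S _).symm
  rw [huniv, hsplit, hsplit, hSSc, hScS]
  ring

end Split

/-! ### Maximum-weight independent sets -/

variable (T p) in
/-- `S` is an independent set of maximum `p`-weight. -/
def IsMaxIndep (S : Finset V) : Prop :=
  T.IsIndep S ∧ ∀ S', T.IsIndep S' → ∑ x ∈ S', p x ≤ ∑ x ∈ S, p x

open Classical in
lemma exists_isMaxIndep [Finite V] (T : TripleSystem V) (p : V → ℝ) :
    ∃ S, T.IsMaxIndep p S := by
  have := Fintype.ofFinite V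
  obtain ⟨S, hS, hmax⟩ := exists_max_image ({S | T.IsIndep S} : Finset (Finset V))
    (fun S => ∑ x ∈ S, p x) ⟨∅, mem_filter.2 ⟨mem_univ _, by simp [IsIndep]⟩⟩
  simp only [mem_filter, mem_univ, true_and] at hS hmax
  exact ⟨S, hS, hmax⟩

section MaxIndep

variable [Fintype V] {S : Finset V}

lemma IsMaxIndep.codegWeight_le (hS : T.IsMaxIndep p S) (hT : T.F32Free) (x y : V) :
    T.codegWeight p x y univ ≤ ∑ z ∈ S, p z := by
  rw [codegWeight_univ]
  exact hS.2 _ (hT.isIndep_neighbors x y)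

lemma IsMaxIndep.linkWeight_univ_le (hS : T.IsMaxIndep p S) (hT : T.F32Free)
    (hp : ∀ v, 0 ≤ p v) (v : V) (P : Finset V) :
    T.linkWeight p v P univ ≤ (∑ x ∈ P, p x) * ∑ z ∈ S, p z := by
  rw [linkWeight_eq_sum_codegWeight, sum_mul]
  exact sum_le_sum fun x _ => mul_le_mul_of_nonneg_left (hS.codegWeight_le hT v x) (hp x)

lemma IsMaxIndep.weight_univ_le (hS : T.IsMaxIndep p S) (hT : T.F32Free) (hp : ∀ v, 0 ≤ p v) :
    T.weight p univ univ univ ≤ (∑ v, p v) * ((∑ v, p v) * ∑ z ∈ S, p z) := by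
  rw [weight, sum_mul]
  exact sum_le_sum fun x _ => mul_le_mul_of_nonneg_left (hS.linkWeight_univ_le hT hp x _) (hp x)

variable [DecidableEq V]

variable (T p S) in
/-- The `p`-weight of the triples in `Sᶜ × S × S` that are not edges. It vanishes if all triples
with exactly one vertex outside `S` are edges. -/
noncomputable def missingWeight : ℝ := ∑ r ∈ Sᶜ, p r * ((∑ x ∈ S, p x) ^ 2 - T.linkWeight p r S S)

lemma missingWeight_eq : T.missingWeight p S
    = (∑ r ∈ Sᶜ, p r) * (∑ x ∈ S, p x) ^ 2 - T.weight p Sᶜ S S := by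
  simp only [missingWeight, weight, mul_sub, sum_sub_distrib, sum_mul]

lemma IsIndep.weight_univ_eq (hS : T.IsIndep S) :
    T.weight p univ univ univ
      = 3 * T.weight p Sᶜ S S + 3 * T.weight p Sᶜ S Sᶜ + T.weight p Sᶜ Sᶜ Sᶜ := by
  rw [weight_split S, hS.weight_eq_zero]
  ring

lemma IsMaxIndep.linkWeight_add_le (hS : T.IsMaxIndep p S) (hT : T.F32Free)
    (hp : ∀ v, 0 ≤ p v) (v : V) :
    T.linkWeight p v S S + T.linkWeight p v S Sᶜ ≤ (∑ x ∈ S, p x) ^ 2 := by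
  rw [linkWeight_comm v S Sᶜ, ← linkWeight_split_left, linkWeight_comm, sq]
  exact hS.linkWeight_univ_le hT hp v S

/-! For a vertex `r` outside a maximum-weight independent set `S` write `A`, `G`, `B` for the
weights of its link inside `S`, between `S` and `Sᶜ`, and inside `Sᶜ`. A bound
`c₁ A + c₂ G + c₃ B - A B ≤ c` valid for all `r` can be summed over `Sᶜ`, where the product term
is controlled by `sum_linkWeight_mul_linkWeight_le`. The three inequalities below are the choices
of coefficients needed. -/

lemma F32Free.weight_combination_le (hT : T.F32Free) (hp : ∀ v, 0 ≤ p v) {c₁ c₂ c₃ c : ℝ}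
    (h : ∀ r, c₁ * T.linkWeight p r S S + c₂ * T.linkWeight p r S Sᶜ + c₃ * T.linkWeight p r Sᶜ Sᶜ
      - T.linkWeight p r S S * T.linkWeight p r Sᶜ Sᶜ ≤ c) :
    c₁ * T.weight p Sᶜ S S + c₂ * T.weight p Sᶜ S Sᶜ
      + (c₃ - 2 / 3 * (∑ x ∈ S, p x) ^ 2) * T.weight p Sᶜ Sᶜ Sᶜ ≤ c * ∑ r ∈ Sᶜ, p r := by
  have hsum := sum_le_sum fun r (_ : r ∈ Sᶜ) => mul_le_mul_of_nonneg_left (h r) (hp r)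
  have hexpand : ∑ r ∈ Sᶜ, p r * (c₁ * T.linkWeight p r S S + c₂ * T.linkWeight p r S Sᶜ
        + c₃ * T.linkWeight p r Sᶜ Sᶜ - T.linkWeight p r S S * T.linkWeight p r Sᶜ Sᶜ)
      = c₁ * T.weight p Sᶜ S S + c₂ * T.weight p Sᶜ S Sᶜ + c₃ * T.weight p Sᶜ Sᶜ Sᶜ
        - ∑ r ∈ Sᶜ, p r * T.linkWeight p r S S * T.linkWeight p r Sᶜ Sᶜ := by
    simp only [weight, mul_sum, ← sum_add_distrib, ← sum_sub_distrib]
    exact sum_congr rfl fun r _ => by ring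
  rw [hexpand, ← sum_mul] at hsum
  linarith [hT.sum_linkWeight_mul_linkWeight_le hp S Sᶜ]

end MaxIndep

lemma link_quadratic_bound {a Δ A G B : ℝ} (hA : 0 ≤ A) (hG : 0 ≤ G) (hAG : A + G ≤ a)
    (hΔ : A + 2 * G + B ≤ Δ) :
    2 * a * A + 2 * a * G + a * B - A * B ≤ (Δ - a) ^ 2 / 4 + 2 * a ^ 2 := by
  have hdefect : (a - A) * B ≤ (a - A) * (Δ - A - 2 * G) :=
    mul_le_mul_of_nonneg_left (by linarith) (by linarith)
  have hslack : (a - A) * (a - A - G) ≤ a * (a - A - G) :=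
    mul_le_mul_of_nonneg_right (by linarith) (by linarith)
  nlinarith [sq_nonneg ((Δ - a) / 2 - (a - A))]

lemma link_sharp_bound {a b Δ A G B : ℝ} (hA : 0 ≤ A) (hG : 0 ≤ G) (hAG : A + G ≤ a)
    (hB : B ≤ b) (hΔ : A + 2 * G + B ≤ Δ) (hΔa : Δ ≤ 3 / 2 * a) (hba : b + Δ ≤ 2 * a) :
    a * A + a * G + a * B - A * B ≤ (Δ - a) ^ 2 / 4 + a ^ 2 := by
  obtain ⟨F, rfl⟩ : ∃ F, A = a - F := ⟨a - A, by ring⟩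
  obtain ⟨h, rfl⟩ : ∃ h, G = F - h := ⟨F - G, by ring⟩
  suffices F * B - a * h ≤ (Δ - a) ^ 2 / 4 by nlinarith
  have hh : 0 ≤ h := by linarith
  rcases le_total (2 * F) a with hF | hF
  · have h₁ : 2 * F * h ≤ a * h := mul_le_mul_of_nonneg_right hF hh
    have h₂ : F * (B - 2 * h) ≤ F * (Δ - a - F) :=
      mul_le_mul_of_nonneg_left (by linarith) (by linarith)
    nlinarith [sq_nonneg ((Δ - a) / 2 - F)]
  · have h₁ : a * (a + F + B - Δ) ≤ a * (2 * h) :=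
      mul_le_mul_of_nonneg_left (by linarith) (by linarith)
    have h₂ : (2 * F - a) * B ≤ (2 * F - a) * (2 * a - Δ) :=
      mul_le_mul_of_nonneg_left (by linarith) (by linarith)
    have h₃ : 0 ≤ (a - F) * (3 / 2 * a - Δ) := mul_nonneg (by linarith) (by linarith)
    nlinarith [sq_nonneg (Δ - a)]

lemma link_linear_bound {a b Δ A G B : ℝ} (ha : 0 ≤ a) (hA : A ≤ a) (hB : 0 ≤ B) (hBb : B ≤ b)
    (hΔ : A + 2 * G + B ≤ Δ) :
    (a / 2 + b) * A + a * G + a * B - A * B ≤ a * b + a / 2 * Δ := by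
  have h₁ : (a - A) * B ≤ (a - A) * b := mul_le_mul_of_nonneg_left hBb (by linarith)
  have h₂ : a * (A + 2 * G + B) ≤ a * Δ := mul_le_mul_of_nonneg_left hΔ ha
  nlinarith [mul_nonneg ha hB]

section MaxIndepBounds

variable [Fintype V] [DecidableEq V] {S : Finset V} {α ρ Δ : ℝ}

lemma IsMaxIndep.weight_le (hS : T.IsMaxIndep p S) (hT : T.F32Free) (hp : ∀ v, 0 ≤ p v)
    (hα : ∑ x ∈ S, p x = α) (hρ : ∑ r ∈ Sᶜ, p r = ρ) :
    T.weight p univ univ univ ≤ 3 * ρ * α ^ 2 + T.weight p Sᶜ Sᶜ Sᶜ := by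
  have hsum : T.weight p Sᶜ S S + T.weight p Sᶜ S Sᶜ ≤ ρ * α ^ 2 := by
    rw [weight, weight, ← sum_add_distrib, ← hρ, ← hα, sum_mul]
    refine sum_le_sum fun r _ => ?_
    rw [← mul_add]
    exact mul_le_mul_of_nonneg_left (hS.linkWeight_add_le hT hp r) (hp r)
  linarith [hS.1.weight_univ_eq (p := p)]

lemma IsMaxIndep.two_mul_sq_mul_weight_le (hS : T.IsMaxIndep p S) (hT : T.F32Free)
    (hp : ∀ v, 0 ≤ p v) (hα : ∑ x ∈ S, p x = α) (hρ : ∑ r ∈ Sᶜ, p r = ρ)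
    (hΔ : ∀ v, T.linkWeight p v univ univ ≤ Δ) :
    2 * α ^ 2 * T.weight p univ univ univ
      ≤ 6 * ρ * α ^ 4 + α ^ 2 * T.weight p Sᶜ Sᶜ Sᶜ + 3 / 4 * ρ * (Δ - α ^ 2) ^ 2 := by
  have hsum := hT.weight_combination_le hp (S := S) fun r => link_quadratic_bound (a := α ^ 2)
    (linkWeight_nonneg hp r S S) (linkWeight_nonneg hp r S Sᶜ)
    (hα ▸ hS.linkWeight_add_le hT hp r) (linkWeight_split (T := T) S r ▸ hΔ r)
  rw [hα, hρ] at hsum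
  linarith [congrArg (2 * α ^ 2 * ·) (hS.1.weight_univ_eq (p := p))]

lemma IsMaxIndep.sq_mul_weight_le (hS : T.IsMaxIndep p S) (hT : T.F32Free)
    (hp : ∀ v, 0 ≤ p v) (hα : ∑ x ∈ S, p x = α) (hρ : ∑ r ∈ Sᶜ, p r = ρ)
    (hΔ : ∀ v, T.linkWeight p v univ univ ≤ Δ) (hΔα : Δ ≤ 3 / 2 * α ^ 2)
    (hρα : ρ ^ 2 + Δ ≤ 2 * α ^ 2) :
    α ^ 2 * T.weight p univ univ univ ≤ 3 * ρ * α ^ 4 + 3 / 4 * ρ * (Δ - α ^ 2) ^ 2 := by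
  have hB (r : V) : T.linkWeight p r Sᶜ Sᶜ ≤ ρ ^ 2 := by
    rw [sq, ← hρ]
    exact linkWeight_le hp r Sᶜ Sᶜ
  have hsum := hT.weight_combination_le hp (S := S) fun r => link_sharp_bound (a := α ^ 2)
    (linkWeight_nonneg hp r S S) (linkWeight_nonneg hp r S Sᶜ)
    (hα ▸ hS.linkWeight_add_le hT hp r) (hB r) (linkWeight_split (T := T) S r ▸ hΔ r) hΔα hρα
  rw [hα, hρ] at hsum
  linarith [congrArg (α ^ 2 * ·) (hS.1.weight_univ_eq (p := p))]

lemma IsMaxIndep.sq_mul_weight_le_sub_missingWeight (hS : T.IsMaxIndep p S) (hT : T.F32Free)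
    (hp : ∀ v, 0 ≤ p v) (hα : ∑ x ∈ S, p x = α) (hρ : ∑ r ∈ Sᶜ, p r = ρ)
    (hΔ : ∀ v, T.linkWeight p v univ univ ≤ Δ) :
    α ^ 2 * T.weight p univ univ univ
      ≤ 3 * ρ * α ^ 4 - (3 / 2 * α ^ 2 - 3 * ρ ^ 2) * T.missingWeight p S
        + 3 / 2 * α ^ 2 * ρ * (Δ - α ^ 2) := by
  have hA (r : V) : T.linkWeight p r S S ≤ α ^ 2 := by
    rw [sq, ← hα]
    exact linkWeight_le hp r S S
  have hB (r : V) : T.linkWeight p r Sᶜ Sᶜ ≤ ρ ^ 2 := by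
    rw [sq, ← hρ]
    exact linkWeight_le hp r Sᶜ Sᶜ
  have hsum := hT.weight_combination_le hp (S := S) fun r => link_linear_bound (sq_nonneg α)
    (hA r) (linkWeight_nonneg hp r Sᶜ Sᶜ) (hB r) (linkWeight_split (T := T) S r ▸ hΔ r)
  rw [hα, hρ] at hsum
  rw [missingWeight_eq, hα, hρ]
  linarith [congrArg (α ^ 2 * ·) (hS.1.weight_univ_eq (p := p))]

end MaxIndepBounds

/-! ### The Lagrangian of an `𝔽_{3,2}`-free triple system -/

lemma single_apply_nonneg [DecidableEq V] (v : V) {θ : ℝ} (hθ : 0 ≤ θ) (u : V) :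
    0 ≤ (Pi.single v θ : V → ℝ) u :=
  (Pi.single_nonneg.2 hθ : (0 : V → ℝ) ≤ Pi.single v θ) u

section Weight

variable [Fintype V]

lemma weight_smul (c : ℝ) :
    T.weight (c • p) univ univ univ = c ^ 3 * T.weight p univ univ univ := by
  simp only [weight_eq_sum, mul_sum, Pi.smul_apply, smul_eq_mul]
  exact sum_congr rfl fun x _ => sum_congr rfl fun y _ => sum_congr rfl fun z _ => by ring

lemma weight_ite_mem [DecidableEq V] (R : Finset V) :
    T.weight (fun v => if v ∈ R then p v else 0) univ univ univ = T.weight p R R R := by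
  simp only [weight, linkWeight, ite_mul, mul_ite, zero_mul, mul_zero, sum_ite_irrel,
    sum_const_zero, sum_ite_mem, univ_inter]

lemma weight_add_three_mul_le_weight_add {q : V → ℝ} (hp : ∀ v, 0 ≤ p v) (hq : ∀ v, 0 ≤ q v) :
    T.weight p univ univ univ + 3 * ∑ v, q v * T.linkWeight p v univ univ
      ≤ T.weight (p + q) univ univ univ := by
  rw [three_mul_sum_mul_linkWeight, weight_eq_sum, weight_eq_sum]
  simp only [← sum_add_distrib, ← add_mul]
  refine sum_le_sum fun x _ => sum_le_sum fun y _ => sum_le_sum fun z _ =>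
    mul_le_mul_of_nonneg_right ?_ (ind_nonneg x y z)
  have hhigher : 0 ≤ p x * q y * q z + q x * p y * q z + q x * q y * p z + q x * q y * q z := by
    have hx := hp x; have hy := hp y; have hz := hp z
    have hx' := hq x; have hy' := hq y; have hz' := hq z
    positivity
  simp only [Pi.add_apply]
  linarith

lemma weight_add_mul_linkWeight_le [DecidableEq V] (hp : ∀ v, 0 ≤ p v) (v : V) {θ : ℝ}
    (hθ : 0 ≤ θ) :
    T.weight p univ univ univ + 3 * (θ * T.linkWeight p v univ univ)
      ≤ T.weight (p + Pi.single v θ : V → ℝ) univ univ univ := by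
  have hsum : ∑ u, Pi.single (M := fun _ => ℝ) v θ u * T.linkWeight p u univ univ
      = θ * T.linkWeight p v univ univ := by
    simp [Pi.single_apply]
  rw [← hsum]
  exact weight_add_three_mul_le_weight_add hp (single_apply_nonneg v hθ)

lemma sum_add_single [DecidableEq V] (v : V) (θ : ℝ) :
    ∑ u, (p + Pi.single v θ : V → ℝ) u = ∑ u, p u + θ := by
  simp only [Pi.add_apply, sum_add_distrib, sum_pi_single', mem_univ, if_true]

end Weight

section HomogeneousBound

variable [Fintype V] {τ : ℝ}

lemma add_mul_linkWeight_le_of_weight_le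
    (hτ : ∀ q : V → ℝ, (∀ v, 0 ≤ q v) → T.weight q univ univ univ ≤ τ * (∑ v, q v) ^ 3)
    (hp : ∀ v, 0 ≤ p v) (v : V) {θ : ℝ} (hθ : 0 ≤ θ) :
    T.weight p univ univ univ + 3 * (θ * T.linkWeight p v univ univ) ≤ τ * (∑ v, p v + θ) ^ 3 := by
  classical
  rw [← sum_add_single v θ]
  exact (weight_add_mul_linkWeight_le hp v hθ).trans
    (hτ _ fun u => add_nonneg (hp u) (single_apply_nonneg v hθ u))

lemma weight_le_of_weight_univ_le
    (hτ : ∀ q : V → ℝ, (∀ v, 0 ≤ q v) → T.weight q univ univ univ ≤ τ * (∑ v, q v) ^ 3)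
    (hp : ∀ v, 0 ≤ p v) (R : Finset V) : T.weight p R R R ≤ τ * (∑ v ∈ R, p v) ^ 3 := by
  classical
  simpa only [weight_ite_mem, sum_ite_mem, univ_inter] using
    hτ (fun v => if v ∈ R then p v else 0) fun v => by split_ifs; exacts [hp v, le_rfl]

/-- At a maximizer of the Lagrangian polynomial on the simplex every partial derivative is at most
the degree times the maximum, as one sees by letting `θ → 0` in
`add_mul_linkWeight_le_of_weight_le`. -/
lemma linkWeight_le_of_weight_eq
    (hτ : ∀ q : V → ℝ, (∀ v, 0 ≤ q v) → T.weight q univ univ univ ≤ τ * (∑ v, q v) ^ 3)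
    (hp : ∀ v, 0 ≤ p v) (hp1 : ∑ v, p v = 1) (hmax : T.weight p univ univ univ = τ) (v : V) :
    T.linkWeight p v univ univ ≤ τ := by
  have hlim : Tendsto (fun θ : ℝ => τ * (1 + θ + θ ^ 2 / 3)) (nhdsWithin 0 (Set.Ioi 0))
      (nhds τ) := by
    have hcont : Continuous fun θ : ℝ => τ * (1 + θ + θ ^ 2 / 3) := by fun_prop
    simpa using (hcont.tendsto 0).mono_left nhdsWithin_le_nhds
  refine ge_of_tendsto hlim (eventually_nhdsWithin_of_forall fun θ (hθ : 0 < θ) => ?_)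
  have hpert := add_mul_linkWeight_le_of_weight_le hτ hp v hθ.le
  rw [hmax, hp1] at hpert
  refine le_of_mul_le_mul_left ?_ hθ
  linarith

end HomogeneousBound

section Numeric

variable {α τ : ℝ}

lemma density_range (hα : 0 < α) (hτ : 4 / 9 ≤ τ)
    (h : τ ≤ 3 * (1 - α) * α ^ 2 + τ * (1 - α) ^ 3) :
    53 / 100 ≤ α ∧ α ≤ 73 / 100 ∧ τ ≤ 4642 / 10000 := by
  have hdiv : τ * (3 - 3 * α + α ^ 2) ≤ 3 * α * (1 - α) :=
    le_of_mul_le_mul_left (by linarith : α * (τ * (3 - 3 * α + α ^ 2)) ≤ α * (3 * α * (1 - α))) hα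
  have hpos : 0 < 3 - 3 * α + α ^ 2 := by nlinarith [sq_nonneg (α - 3 / 2)]
  have hquad : 31 * α ^ 2 - 39 * α + 12 ≤ 0 := by nlinarith
  refine ⟨by nlinarith, by nlinarith, ?_⟩
  by_contra! hlt
  nlinarith [sq_nonneg (α - 634 / 1000)]

lemma density_poly_pos (hα : 53 / 100 ≤ α) (hα' : α ≤ 57 / 100) :
    1 / 10000 < 2 * α ^ 2 * (4 / 9) - 6 * (1 - α) * α ^ 4 - α ^ 2 * (4 / 9) * (1 - α) ^ 3
      - 3 / 4 * (1 - α) * (4 / 9 - α ^ 2) ^ 2 := by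
  obtain ⟨x, rfl⟩ : ∃ x, α = 57 / 100 - x := ⟨57 / 100 - α, by ring⟩
  have hx0 : 0 ≤ x := by linarith
  have hx1 : x ≤ 4 / 100 := by linarith
  have hpow (n : ℕ) : x ^ (n + 1) ≤ x * (4 / 100) ^ n := by
    rw [pow_succ']
    exact mul_le_mul_of_nonneg_left (pow_le_pow_left₀ hx0 hx1 n) hx0
  have h2 := hpow 1
  have h3 := hpow 2
  have h4 := hpow 3
  have h5 := hpow 4
  have h4' := pow_nonneg hx0 4
  norm_num only at h2 h3 h4 h5
  ring_nf
  linarith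

lemma le_of_density_le_of_small (hα : 53 / 100 ≤ α) (hα' : α ≤ 57 / 100) (hτ' : τ ≤ 4642 / 10000)
    (h : 2 * α ^ 2 * τ
      ≤ 6 * (1 - α) * α ^ 4 + α ^ 2 * (τ * (1 - α) ^ 3) + 3 / 4 * (1 - α) * (τ - α ^ 2) ^ 2) :
    τ ≤ 4 / 9 := by
  by_contra! hτ
  have hsq : 28 / 100 ≤ α ^ 2 := by nlinarith
  have hcube : (1 - α) ^ 3 ≤ 1 := pow_le_one₀ (by linarith) (by linarith)
  have hlast : (1 - α) * (τ + 4 / 9 - 2 * α ^ 2) ≤ 47 / 100 * (35 / 100) :=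
    mul_le_mul (by linarith) (by linarith) (by nlinarith) (by norm_num)
  have hslope : 0 ≤ (τ - 4 / 9)
      * (2 * α ^ 2 - α ^ 2 * (1 - α) ^ 3 - 3 / 4 * (1 - α) * (τ + 4 / 9 - 2 * α ^ 2)) :=
    mul_nonneg (by linarith) (by nlinarith)
  linarith [density_poly_pos hα hα']

lemma density_gap (hα : 57 / 100 ≤ α) :
    4 * (3 * α - 2) ^ 2 ≤ 108 * (α ^ 2 * (4 / 9) - 3 * (1 - α) * α ^ 4
      - 3 / 4 * (1 - α) * (4 / 9 - α ^ 2) ^ 2) := by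
  have hcubic : 4 ≤ 45 * α ^ 3 + 15 * α ^ 2 - 8 * α - 4 := by
    nlinarith [mul_nonneg (sub_nonneg.2 hα) (sq_nonneg α)]
  calc 4 * (3 * α - 2) ^ 2
      ≤ (45 * α ^ 3 + 15 * α ^ 2 - 8 * α - 4) * (3 * α - 2) ^ 2 :=
        mul_le_mul_of_nonneg_right hcubic (sq_nonneg _)
    _ = _ := by ring

lemma le_of_density_le_of_large (hα : 57 / 100 ≤ α) (hα' : α ≤ 73 / 100) (hτ' : τ ≤ 4642 / 10000)
    (h : α ^ 2 * τ ≤ 3 * (1 - α) * α ^ 4 + 3 / 4 * (1 - α) * (τ - α ^ 2) ^ 2) : τ ≤ 4 / 9 := by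
  by_contra! hτ
  have hsq : 32 / 100 ≤ α ^ 2 := by nlinarith
  have hlast : (1 - α) * (τ + 4 / 9 - 2 * α ^ 2) ≤ 43 / 100 * (3 / 10) := by nlinarith
  have hslope : 0 < (τ - 4 / 9) * (α ^ 2 - 3 / 4 * (1 - α) * (τ + 4 / 9 - 2 * α ^ 2)) :=
    mul_pos (by linarith) (by linarith)
  linarith [density_gap hα, sq_nonneg (3 * α - 2)]

end Numeric

section Density

variable [Fintype V]

lemma F32Free.weight_le_of_isMax (hT : T.F32Free) (hp : ∀ v, 0 ≤ p v) (hp1 : ∑ v, p v = 1)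
    (hmax : ∀ q : V → ℝ, (∀ v, 0 ≤ q v) →
      T.weight q univ univ univ ≤ T.weight p univ univ univ * (∑ v, q v) ^ 3) :
    T.weight p univ univ univ ≤ 4 / 9 := by
  classical
  by_contra! hτ
  obtain ⟨S, hS⟩ := T.exists_isMaxIndep p
  obtain ⟨α, hα⟩ : ∃ α, ∑ x ∈ S, p x = α := ⟨_, rfl⟩
  have hρ : ∑ r ∈ Sᶜ, p r = 1 - α := by linarith [sum_add_sum_compl S p]
  have hα0 : 0 < α := by
    have hle := hS.weight_univ_le hT hp
    rw [hp1, hα] at hle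
    linarith
  have hlink := linkWeight_le_of_weight_eq hmax hp hp1 rfl
  have hrest := weight_le_of_weight_univ_le hmax hp Sᶜ
  rw [hρ] at hrest
  have hfirst := hS.weight_le hT hp hα hρ
  have hsecond := hS.two_mul_sq_mul_weight_le hT hp hα hρ hlink
  have hthird := hS.sq_mul_weight_le hT hp hα hρ hlink
  generalize T.weight p univ univ univ = τ at *
  obtain ⟨hα_lower, hα_upper, hτ'⟩ := density_range hα0 hτ.le (by linarith)
  rcases le_total α (57 / 100) with hsmall | hlarge
  · refine hτ.not_ge (le_of_density_le_of_small hα_lower hsmall hτ' ?_)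
    linarith [mul_le_mul_of_nonneg_left hrest (sq_nonneg α)]
  · refine hτ.not_ge (le_of_density_le_of_large hlarge hα_upper hτ' (hthird ?_ ?_)) <;> nlinarith

theorem F32Free.weight_le (hT : T.F32Free) (hp : ∀ v, 0 ≤ p v) :
    T.weight p univ univ univ ≤ 4 / 9 * (∑ v, p v) ^ 3 := by
  classical
  rcases isEmpty_or_nonempty V with hV | hV
  · simp [weight]
  have hcont : Continuous fun q : V → ℝ => T.weight q univ univ univ := by
    unfold weight linkWeight
    fun_prop
  obtain ⟨q, hq, hmax⟩ := (isCompact_stdSimplex ℝ V).exists_isMaxOn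
    ⟨_, single_mem_stdSimplex ℝ (Classical.arbitrary V)⟩ hcont.continuousOn
  have hhom (q' : V → ℝ) (hq' : ∀ v, 0 ≤ q' v) :
      T.weight q' univ univ univ ≤ T.weight q univ univ univ * (∑ v, q' v) ^ 3 := by
    rcases (sum_nonneg fun v (_ : v ∈ univ) => hq' v).eq_or_lt with hzero | hpos
    · obtain rfl : q' = 0 :=
        funext fun v => (sum_eq_zero_iff_of_nonneg fun v _ => hq' v).1 hzero.symm v (mem_univ v)
      simp [weight]
    · have hmem : (∑ v, q' v)⁻¹ • q' ∈ stdSimplex ℝ V :=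
        ⟨fun v => mul_nonneg (inv_nonneg.2 hpos.le) (hq' v), by
          simp only [Pi.smul_apply, smul_eq_mul, ← mul_sum, inv_mul_cancel₀ hpos.ne']⟩
      have hle : T.weight _ univ univ univ ≤ T.weight q univ univ univ := hmax hmem
      rwa [weight_smul, inv_pow, inv_mul_le_iff₀ (pow_pos hpos 3), mul_comm] at hle
  exact (hhom p hp).trans (mul_le_mul_of_nonneg_right (hT.weight_le_of_isMax hq.1 hq.2 hhom)
    (pow_nonneg (sum_nonneg fun v _ => hp v) 3))

end Density

/-! ### Stability -/

section NumericStability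

variable {α τ M : ℝ}

lemma near_extremal_range (hα : 4 / 10 ≤ α) (hτ : 4 / 9 - 1 / 10 ^ 32 ≤ τ)
    (h : τ ≤ 3 * (1 - α) * α ^ 2 + 4 / 9 * (1 - α) ^ 3) : 53 / 100 ≤ α ∧ α ≤ 73 / 100 := by
  have hquad : 31 * α ^ 2 - 39 * α + 12 ≤ 1 / 1000 := by
    have hcubic : α * (31 * α ^ 2 - 39 * α + 12) ≤ 9 / 10 ^ 32 := by norm_num at hτ ⊢; linarith
    by_contra! hlt
    norm_num at hcubic
    nlinarith
  constructor <;> nlinarith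

lemma near_extremal_large (hα : 53 / 100 ≤ α) (hα' : α ≤ 73 / 100)
    (hτ : 4 / 9 - 1 / 10 ^ 32 ≤ τ)
    (h : 2 * α ^ 2 * τ ≤ 6 * (1 - α) * α ^ 4 + α ^ 2 * (4 / 9 * (1 - α) ^ 3)
      + 3 / 4 * (1 - α) * (4 / 9 + 1 / 10 ^ 16 - α ^ 2) ^ 2) : 57 / 100 ≤ α := by
  by_contra! hlt
  have hgap := density_poly_pos hα hlt.le
  have hτα := mul_le_mul_of_nonneg_left hτ (sq_nonneg α)
  have hshift : (4 / 9 + 1 / 10 ^ 16 - α ^ 2) ^ 2 ≤ (4 / 9 - α ^ 2) ^ 2 + 1 / 10 ^ 10 := by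
    norm_num; nlinarith [sq_nonneg α]
  have hshift' := mul_le_mul_of_nonneg_left hshift (by linarith : 0 ≤ 3 / 4 * (1 - α))
  have hα1 : α ^ 2 ≤ 1 := by nlinarith
  norm_num at hgap hshift' hτα h
  linarith

lemma near_extremal_abs_le (hα : 57 / 100 ≤ α) (hα' : α ≤ 73 / 100)
    (hτ : 4 / 9 - 1 / 10 ^ 32 ≤ τ)
    (h : α ^ 2 * τ ≤ 3 * (1 - α) * α ^ 4
      + 3 / 4 * (1 - α) * (4 / 9 + 1 / 10 ^ 16 - α ^ 2) ^ 2) : |3 * α - 2| ≤ 1 / 10 ^ 7 := by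
  refine abs_le_of_sq_le_sq ?_ (by norm_num)
  have hsq : (57 / 100 : ℝ) ^ 2 ≤ α ^ 2 := by nlinarith
  have hτα := mul_le_mul_of_nonneg_left hτ (sq_nonneg α)
  have hshift : (4 / 9 + 1 / 10 ^ 16 - α ^ 2) ^ 2
      ≤ (4 / 9 - α ^ 2) ^ 2 + 1 / 10 ^ 16 * (3 / 10) := by
    norm_num at hsq ⊢; nlinarith
  have hshift' := mul_le_mul_of_nonneg_left hshift (by linarith : 0 ≤ 3 / 4 * (1 - α))
  have hgap := density_gap hα
  norm_num at hshift' hτα h ⊢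
  nlinarith

lemma near_extremal_missing_le (hα : |3 * α - 2| ≤ 1 / 10 ^ 7) (hM : 0 ≤ M)
    (hτ : 4 / 9 - 1 / 10 ^ 32 ≤ τ)
    (h : α ^ 2 * τ ≤ 3 * (1 - α) * α ^ 4 - (3 / 2 * α ^ 2 - 3 * (1 - α) ^ 2) * M
      + 3 / 2 * α ^ 2 * (1 - α) * (4 / 9 + 1 / 10 ^ 16 - α ^ 2)) : M ≤ 1 / 10 ^ 7 := by
  obtain ⟨hα_lower, hα_upper⟩ := abs_le.1 hα
  norm_num at hα_lower hα_upper
  have hmain : 3 * (1 - α) * α ^ 2 ≤ 4 / 9 := by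
    nlinarith [mul_nonneg (by linarith : 0 ≤ α) (sq_nonneg (α - 2 / 3)), sq_nonneg (α - 2 / 3)]
  have hmain' := mul_le_mul_of_nonneg_right hmain (sq_nonneg α)
  have hcoeff : 3 / 10 ≤ 3 / 2 * α ^ 2 - 3 * (1 - α) ^ 2 := by nlinarith
  have hcoeff' := mul_le_mul_of_nonneg_right hcoeff hM
  have hsmall : 4 / 9 + 1 / 10 ^ 16 - α ^ 2 ≤ 5 / 10 ^ 8 := by norm_num; nlinarith
  have hsmall' := mul_le_mul_of_nonneg_left hsmall
    (mul_nonneg (sq_nonneg α) (by linarith : 0 ≤ 1 - α))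
  have hτα := mul_le_mul_of_nonneg_left hτ (sq_nonneg α)
  norm_num at hsmall' hτα h ⊢
  nlinarith

end NumericStability

section Stability

lemma sq_sum_sub_linkWeight (v : V) (S : Finset V) :
    (∑ x ∈ S, p x) ^ 2 - T.linkWeight p v S S
      = ∑ x ∈ S, ∑ y ∈ S, p x * p y * (1 - T.ind v x y) := by
  simp only [linkWeight, sq, sum_mul_sum, mul_sub, mul_one, sum_sub_distrib]

lemma sq_sum_sub_linkWeight_nonneg (hp : ∀ v, 0 ≤ p v) (v : V) (S : Finset V) :
    0 ≤ (∑ x ∈ S, p x) ^ 2 - T.linkWeight p v S S := by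
  rw [sq]
  exact sub_nonneg.2 (linkWeight_le hp v S S)

lemma mul_linkWeight_le (hp : ∀ v, 0 ≤ p v) {v : V} {c : ℝ} {f : V → V → ℝ} {P Q : Finset V}
    (hf : ∀ x y, 0 ≤ f x y) (h : ∀ x y, T.Adj v x y → c ≤ f x y) :
    c * T.linkWeight p v P Q ≤ ∑ x ∈ P, ∑ y ∈ Q, p x * p y * f x y := by
  simp only [linkWeight, mul_sum]
  refine sum_le_sum fun x _ => sum_le_sum fun y _ => ?_
  rw [mul_left_comm]
  refine mul_le_mul_of_nonneg_left ?_ (mul_nonneg (hp x) (hp y))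
  by_cases hadj : T.Adj v x y
  · rw [ind_of_adj hadj, mul_one]
    exact h x y hadj
  · rw [ind_of_not_adj hadj, mul_zero]
    exact hf x y

lemma F32Free.linkWeight_le_of_adj (hT : T.F32Free) (hp : ∀ v, 0 ≤ p v) {v r s : V}
    (h : T.Adj v r s) (S : Finset V) :
    T.linkWeight p v S S ≤ 2 * (∑ x ∈ S, p x) * (∑ x ∈ S, p x - T.codegWeight p r s S) := by
  have hdefect : ∑ x ∈ S, p x - T.codegWeight p r s S = ∑ x ∈ S, p x * (1 - T.ind r s x) := by
    simp only [codegWeight, mul_sub, mul_one, sum_sub_distrib]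
  have hdouble : 2 * (∑ x ∈ S, p x) * (∑ x ∈ S, p x - T.codegWeight p r s S)
      = ∑ x ∈ S, ∑ y ∈ S, p x * p y * ((1 - T.ind r s x) + (1 - T.ind r s y)) := by
    rw [hdefect, mul_assoc, two_mul]
    nth_rewrite 1 [mul_comm]
    simp only [sum_mul_sum, ← sum_add_distrib]
    exact sum_congr rfl fun x _ => sum_congr rfl fun y _ => by ring
  rw [hdouble]
  refine sum_le_sum fun x _ => sum_le_sum fun y _ =>
    mul_le_mul_of_nonneg_left ?_ (mul_nonneg (hp x) (hp y))
  by_cases hx : T.Adj r s x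
  · by_cases hy : T.Adj r s y
    · rw [ind_of_not_adj (hT r s v x y (rotate h) hx hy), ind_of_adj hx, ind_of_adj hy]
      norm_num
    · linarith [ind_of_not_adj hy, T.ind_le_one r s x, T.ind_le_one v x y]
  · linarith [ind_of_not_adj hx, T.ind_le_one r s y, T.ind_le_one v x y]

lemma F32Free.codegWeight_sq_le (hT : T.F32Free) (hp : ∀ v, 0 ≤ p v) {x y r : V}
    (h : T.Adj x y r) (S : Finset V) :
    T.codegWeight p x y S ^ 2 ≤ (∑ z ∈ S, p z) ^ 2 - T.linkWeight p r S S := by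
  rw [sq_sum_sub_linkWeight, codegWeight, sq, sum_mul_sum]
  refine sum_le_sum fun a _ => sum_le_sum fun b _ => ?_
  rw [mul_mul_mul_comm]
  refine mul_le_mul_of_nonneg_left ?_ (mul_nonneg (hp a) (hp b))
  have hle := sub_nonneg.2 (T.ind_le_one r a b)
  by_cases ha : T.Adj x y a
  · by_cases hb : T.Adj x y b
    · rw [ind_of_adj ha, ind_of_adj hb, ind_of_not_adj (hT x y r a b h ha hb)]
      norm_num
    · rwa [ind_of_not_adj hb, mul_zero]
  · rwa [ind_of_not_adj ha, zero_mul]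

lemma F32Free.linkWeight_univ_le_of_weight_ge [Fintype V] (hT : T.F32Free) (hp : ∀ v, 0 ≤ p v)
    (hp1 : ∑ v, p v = 1) (hτ : 4 / 9 - 1 / 10 ^ 32 ≤ T.weight p univ univ univ) (v : V) :
    T.linkWeight p v univ univ ≤ 4 / 9 + 1 / 10 ^ 16 := by
  have hpert := add_mul_linkWeight_le_of_weight_le (fun q hq => hT.weight_le hq) hp v
    (by norm_num : (0 : ℝ) ≤ 1 / 10 ^ 16)
  rw [hp1] at hpert
  norm_num at hpert hτ ⊢
  linarith

variable [Fintype V] [DecidableEq V]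

lemma missingWeight_nonneg (hp : ∀ v, 0 ≤ p v) (S : Finset V) : 0 ≤ T.missingWeight p S :=
  sum_nonneg fun r _ => mul_nonneg (hp r) (sq_sum_sub_linkWeight_nonneg hp r S)

/-- Almost extremal weights have a partition `S`, `Sᶜ` of almost extremal proportions `2 : 1` for
which almost all triples with one vertex in `Sᶜ` are edges. -/
lemma F32Free.exists_isIndep_missingWeight_le (hT : T.F32Free) (hp : ∀ v, 0 ≤ p v)
    (hp1 : ∑ v, p v = 1) (hτ : 4 / 9 - 1 / 10 ^ 32 ≤ T.weight p univ univ univ) :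
    ∃ S, T.IsIndep S ∧ |3 * ∑ x ∈ S, p x - 2| ≤ 1 / 10 ^ 7 ∧ T.missingWeight p S ≤ 1 / 10 ^ 7 := by
  obtain ⟨S, hS⟩ := T.exists_isMaxIndep p
  obtain ⟨α, hα⟩ : ∃ α, ∑ x ∈ S, p x = α := ⟨_, rfl⟩
  have hρ : ∑ r ∈ Sᶜ, p r = 1 - α := by linarith [sum_add_sum_compl S p]
  have hlink := hT.linkWeight_univ_le_of_weight_ge hp hp1 hτ
  have hrest := weight_le_of_weight_univ_le (fun q hq => hT.weight_le hq) hp Sᶜ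
  rw [hρ] at hrest
  have hα0 : 4 / 10 ≤ α := by
    have hle := hS.weight_univ_le hT hp
    rw [hp1, hα] at hle
    norm_num at hτ
    linarith
  obtain ⟨hα_lower, hα_upper⟩ :=
    near_extremal_range hα0 hτ ((hS.weight_le hT hp hα hρ).trans (by linarith))
  have hα_large : 57 / 100 ≤ α := near_extremal_large hα_lower hα_upper hτ
    ((hS.two_mul_sq_mul_weight_le hT hp hα hρ hlink).trans
      (by linarith [mul_le_mul_of_nonneg_left hrest (sq_nonneg α)]))
  have hsq : (57 / 100 : ℝ) ^ 2 ≤ α ^ 2 := by nlinarith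
  have habs : |3 * α - 2| ≤ 1 / 10 ^ 7 := near_extremal_abs_le hα_large hα_upper hτ
    (hS.sq_mul_weight_le hT hp hα hρ hlink (by norm_num at hsq ⊢; linarith)
      (by norm_num at hsq ⊢; nlinarith))
  exact ⟨S, hS.1, hα.symm ▸ habs, near_extremal_missing_le habs (missingWeight_nonneg hp S) hτ
    (hS.sq_mul_weight_le_sub_missingWeight hT hp hα hρ hlink)⟩

lemma F32Free.linkWeight_mul_linkWeight_cross_le (hT : T.F32Free) (hp : ∀ v, 0 ≤ p v) (v : V)
    (S : Finset V) :
    T.linkWeight p v S S * T.linkWeight p v S Sᶜ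
      ≤ 2 * (∑ x ∈ S, p x) * T.missingWeight p S := by
  have hsum : 2 * (∑ x ∈ S, p x) * T.missingWeight p S = ∑ r ∈ Sᶜ, ∑ s ∈ S,
      p r * p s * (2 * (∑ x ∈ S, p x) * (∑ x ∈ S, p x - T.codegWeight p r s S)) := by
    generalize 2 * (∑ x ∈ S, p x) = k
    have hr (r : V) : (∑ x ∈ S, p x) ^ 2 - T.linkWeight p r S S
        = ∑ s ∈ S, p s * (∑ x ∈ S, p x - T.codegWeight p r s S) := by
      rw [linkWeight_eq_sum_codegWeight, sq, sum_mul, ← sum_sub_distrib]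
      exact sum_congr rfl fun s _ => (mul_sub _ _ _).symm
    simp only [missingWeight, hr, mul_sum]
    exact sum_congr rfl fun r _ => sum_congr rfl fun s _ => by ring
  rw [hsum, linkWeight_comm v S Sᶜ]
  refine mul_linkWeight_le hp (fun r s => ?_) fun r s h => hT.linkWeight_le_of_adj hp h S
  exact mul_nonneg (mul_nonneg zero_le_two (sum_nonneg fun x _ => hp x))
    (sub_nonneg.2 (codegWeight_le hp r s S))

lemma F32Free.linkWeight_mul_linkWeight_compl_le (hT : T.F32Free) (hp : ∀ v, 0 ≤ p v) (v : V)
    (S : Finset V) :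
    T.linkWeight p v S S * T.linkWeight p v Sᶜ Sᶜ
      ≤ 2 * (∑ x ∈ Sᶜ, p x) * T.missingWeight p S := by
  set f : V → ℝ := fun r => (∑ x ∈ S, p x) ^ 2 - T.linkWeight p r S S with hf
  have hf0 (r : V) : 0 ≤ f r := sq_sum_sub_linkWeight_nonneg hp r S
  have hsum : 2 * (∑ x ∈ Sᶜ, p x) * T.missingWeight p S
      = ∑ b ∈ Sᶜ, ∑ c ∈ Sᶜ, p b * p c * (f b + f c) := by
    rw [missingWeight, mul_assoc, two_mul]
    nth_rewrite 1 [mul_comm]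
    simp only [sum_mul_sum, ← sum_add_distrib]
    exact sum_congr rfl fun x _ => sum_congr rfl fun y _ => by ring
  rw [hsum]
  refine mul_linkWeight_le hp (fun b c => add_nonneg (hf0 b) (hf0 c)) fun b c h => ?_
  have hedge := hT.linkWeight_add_le hp h S S
  simp only [hf]
  linarith

lemma F32Free.codegWeight_sq_mul_codegWeight_le (hT : T.F32Free) (hp : ∀ v, 0 ≤ p v) (x y : V)
    (S : Finset V) :
    T.codegWeight p x y S ^ 2 * T.codegWeight p x y Sᶜ ≤ T.missingWeight p S := by
  rw [codegWeight.eq_def (P := Sᶜ), mul_sum, missingWeight]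
  refine sum_le_sum fun r _ => ?_
  rw [mul_left_comm]
  refine mul_le_mul_of_nonneg_left ?_ (hp r)
  by_cases h : T.Adj x y r
  · rw [ind_of_adj h, mul_one]
    exact hT.codegWeight_sq_le hp h S
  · rw [ind_of_not_adj h, mul_zero]
    exact sq_sum_sub_linkWeight_nonneg hp r S

end Stability

/-! ### Large minimum degree -/

section NumericClassification

variable {α r₁ r₂ P Q M : ℝ}

lemma link_le_left_of_mul_le (hM : M ≤ 112 / 1000) (hsum : 4 / 9 - 1 / 10 ^ 32 ≤ P + 2 * Q + M)
    (hPM : P * M ≤ 2 / 10 ^ 7) (hQ : Q ≤ 45 / 100000) : 4 / 9 - 1 / 100 ≤ P := by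
  have hP : 1 / 4 ≤ P := by norm_num at hsum ⊢; linarith
  have hM_small : M ≤ 8 / 10 ^ 7 := by
    by_contra! hlt
    norm_num at hlt hPM
    nlinarith [hP]
  norm_num at hsum hM_small ⊢
  linarith

lemma link_le_cross_of_split (hα : |3 * α - 2| ≤ 1 / 10 ^ 7) (hr₁ : 0 ≤ r₁) (hr₂ : 0 ≤ r₂)
    (hr : r₁ + r₂ = 1 - α) (hQ : Q ≤ α * r₁ + 5 / 1000 * r₂)
    (hM : M ≤ 2 * (4 / 1000) * r₁ + r₂ ^ 2) (hsum : 4 / 9 - 1 / 1000 ≤ 2 * Q + M) :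
    2 / 9 - 3 / 100 ≤ Q := by
  obtain ⟨hα_lower, hα_upper⟩ := abs_le.1 hα
  norm_num at hα_lower hα_upper
  obtain ⟨e, rfl⟩ : ∃ e, α = 2 / 3 + e := ⟨α - 2 / 3, by ring⟩
  obtain rfl : r₂ = 1 / 3 - e - r₁ := by linarith
  have hr₁_large : 30 / 100 ≤ r₁ := by
    by_contra! hlt
    nlinarith
  nlinarith

end NumericClassification

lemma linkWeight_le_mul_of_codegWeight_le (hp : ∀ v, 0 ≤ p v) {v : V} {P Q : Finset V} {c : ℝ}
    (h : ∀ x ∈ P, T.codegWeight p v x Q ≤ c) : T.linkWeight p v P Q ≤ (∑ x ∈ P, p x) * c := by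
  rw [linkWeight_eq_sum_codegWeight, sum_mul]
  exact sum_le_sum fun x hx => mul_le_mul_of_nonneg_left (h x hx) (hp x)

lemma le_weight_of_forall_le_linkWeight [Fintype V] {c : ℝ} (hp : ∀ v, 0 ≤ p v) (hp1 : ∑ v, p v = 1)
    (h : ∀ v, c ≤ T.linkWeight p v univ univ) : c ≤ T.weight p univ univ univ := by
  calc c = ∑ v, p v * c := by rw [← sum_mul, hp1, one_mul]
    _ ≤ _ := sum_le_sum fun v _ => mul_le_mul_of_nonneg_left (h v) (hp v)

section Classification

variable [Fintype V] [DecidableEq V] {S : Finset V}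

/-- Split `Sᶜ` according to whether the codegree of `v` and `x` into `S` exceeds `c`; where it
does, the codegree into `Sᶜ` is at most `m`. -/
lemma F32Free.exists_linkWeight_compl_le (hT : T.F32Free) (hp : ∀ v, 0 ≤ p v) {c m : ℝ}
    (hc : 0 < c) (hm : T.missingWeight p S ≤ c ^ 2 * m) (v : V) :
    ∃ r₁ r₂, 0 ≤ r₁ ∧ 0 ≤ r₂ ∧ r₁ + r₂ = ∑ x ∈ Sᶜ, p x ∧
      T.linkWeight p v S Sᶜ ≤ (∑ x ∈ S, p x) * r₁ + c * r₂ ∧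
      T.linkWeight p v Sᶜ Sᶜ ≤ 2 * m * r₁ + r₂ ^ 2 := by
  set R₁ := {x ∈ Sᶜ | c < T.codegWeight p v x S}
  set R₂ := {x ∈ Sᶜ | ¬ c < T.codegWeight p v x S}
  have hsplit (f : V → ℝ) : ∑ x ∈ R₁, f x + ∑ x ∈ R₂, f x = ∑ x ∈ Sᶜ, f x :=
    sum_filter_add_sum_filter_not Sᶜ _ f
  have hsplit_link (Q : Finset V) :
      T.linkWeight p v R₁ Q + T.linkWeight p v R₂ Q = T.linkWeight p v Sᶜ Q := hsplit _
  have hcodeg : ∀ x ∈ R₁, T.codegWeight p v x Sᶜ ≤ m := fun x hx => by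
    have hlt := (mem_filter.1 hx).2
    have hsq : c ^ 2 ≤ T.codegWeight p v x S ^ 2 := by gcongr
    refine le_of_mul_le_mul_left ?_ (by positivity : 0 < c ^ 2)
    exact (mul_le_mul_of_nonneg_right hsq (codegWeight_nonneg hp v x Sᶜ)).trans
      ((hT.codegWeight_sq_mul_codegWeight_le hp v x S).trans hm)
  have hR₁ := linkWeight_le_mul_of_codegWeight_le hp hcodeg
  have hR₂₁ : T.linkWeight p v R₂ R₁ ≤ T.linkWeight p v R₁ Sᶜ := by
    rw [linkWeight_comm]
    exact linkWeight_mono hp v subset_rfl (filter_subset _ _)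
  have hR₂ : T.linkWeight p v R₂ Sᶜ = T.linkWeight p v R₂ R₁ + T.linkWeight p v R₂ R₂ := by
    rw [linkWeight_comm v R₂ Sᶜ, ← hsplit_link, linkWeight_comm v R₁ R₂]
  have hR₂S : T.linkWeight p v R₂ S ≤ (∑ x ∈ R₂, p x) * c :=
    linkWeight_le_mul_of_codegWeight_le hp fun x hx => not_lt.1 (mem_filter.1 hx).2
  refine ⟨∑ x ∈ R₁, p x, ∑ x ∈ R₂, p x, sum_nonneg fun x _ => hp x, sum_nonneg fun x _ => hp x,
    hsplit p, ?_, ?_⟩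
  · linarith [linkWeight_comm (T := T) (p := p) v S Sᶜ, hsplit_link S,
      linkWeight_le (T := T) hp v R₁ S]
  · linarith [hsplit_link Sᶜ, linkWeight_le (T := T) hp v R₂ R₂]

lemma F32Free.linkWeight_ge_or_linkWeight_cross_ge (hT : T.F32Free) (hp : ∀ v, 0 ≤ p v)
    (hp1 : ∑ v, p v = 1) (hα : |3 * ∑ x ∈ S, p x - 2| ≤ 1 / 10 ^ 7)
    (hmiss : T.missingWeight p S ≤ 1 / 10 ^ 7) {v : V}
    (hv : 4 / 9 - 1 / 10 ^ 32 ≤ T.linkWeight p v univ univ) :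
    4 / 9 - 1 / 100 ≤ T.linkWeight p v S S ∨ 2 / 9 - 3 / 100 ≤ T.linkWeight p v S Sᶜ := by
  have hρ : ∑ r ∈ Sᶜ, p r = 1 - ∑ x ∈ S, p x := by linarith [sum_add_sum_compl S p]
  obtain ⟨hα_lower, hα_upper⟩ := abs_le.1 hα
  norm_num at hα_lower hα_upper
  have hcross : T.linkWeight p v S S * T.linkWeight p v S Sᶜ ≤ 2 / 10 ^ 7 := by
    refine (hT.linkWeight_mul_linkWeight_cross_le hp v S).trans ?_
    norm_num at hmiss ⊢
    nlinarith [missingWeight_nonneg (T := T) hp S]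
  have hcompl : T.linkWeight p v S S * T.linkWeight p v Sᶜ Sᶜ ≤ 2 / 10 ^ 7 := by
    refine (hT.linkWeight_mul_linkWeight_compl_le hp v S).trans ?_
    norm_num [hρ] at hmiss ⊢
    nlinarith [missingWeight_nonneg (T := T) hp S]
  have hM := linkWeight_le (T := T) hp v Sᶜ Sᶜ
  rw [hρ] at hM
  rw [linkWeight_split S] at hv
  by_cases hQ : T.linkWeight p v S Sᶜ ≤ 45 / 100000
  · exact Or.inl (link_le_left_of_mul_le (by nlinarith) hv hcompl hQ)
  · have hP : T.linkWeight p v S S ≤ 45 / 100000 := by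
      by_contra! hlt
      norm_num at hcross
      nlinarith
    obtain ⟨r₁, r₂, hr₁, hr₂, hr, hQ', hM'⟩ := hT.exists_linkWeight_compl_le hp
      (by norm_num : (0 : ℝ) < 5 / 1000) (m := 4 / 1000) (hmiss.trans (by norm_num)) v
    refine Or.inr (link_le_cross_of_split hα hr₁ hr₂ (hr.trans hρ) hQ' hM' ?_)
    norm_num at hv ⊢
    linarith

/-- With large minimum degree the partition of `exists_isIndep_missingWeight_le` can be corrected
to one with both parts independent: move every vertex to the side its link indicates. -/
lemma F32Free.exists_isIndep_isIndep_compl (hT : T.F32Free) (hp : ∀ v, 0 ≤ p v)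
    (hp1 : ∑ v, p v = 1) (hdeg : ∀ v, 4 / 9 - 1 / 10 ^ 32 ≤ T.linkWeight p v univ univ) :
    ∃ R, T.IsIndep R ∧ T.IsIndep Rᶜ ∧ 6 / 10 ≤ ∑ x ∈ Rᶜ, p x ∧
      ∀ a s b, b ∈ R → T.Adj a s b → T.codegWeight p a s univ ≤ 45 / 100 := by
  obtain ⟨S, hS, hα, hmiss⟩ :=
    hT.exists_isIndep_missingWeight_le hp hp1 (le_weight_of_forall_le_linkWeight hp hp1 hdeg)
  have hclass (v : V) := hT.linkWeight_ge_or_linkWeight_cross_ge hp hp1 hα hmiss (hdeg v)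
  have hρ : ∑ r ∈ Sᶜ, p r = 1 - ∑ x ∈ S, p x := by linarith [sum_add_sum_compl S p]
  obtain ⟨hα_lower, hα_upper⟩ := abs_le.1 hα
  norm_num at hα_lower hα_upper
  set R : Finset V := {v | 4 / 9 - 1 / 100 ≤ T.linkWeight p v S S}
  have mem_R {v : V} : v ∈ R ↔ 4 / 9 - 1 / 100 ≤ T.linkWeight p v S S := by simp [R]
  have cross_of_mem {v : V} (hv : v ∈ Rᶜ) : 2 / 9 - 3 / 100 ≤ T.linkWeight p v S Sᶜ :=
    (hclass v).resolve_left (mt mem_R.2 (mem_compl.1 hv))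
  have hSR : S ⊆ Rᶜ := fun s hs => by
    rw [mem_compl, mem_R, linkWeight, sum_eq_zero fun x hx => sum_eq_zero fun y hy => by
      rw [ind_of_not_adj (hS s hs x hx y hy), mul_zero]]
    norm_num
  refine ⟨R, ?_, ?_, ?_, fun a s b hb hadj => ?_⟩
  · intro a ha b hb c hc hadj
    have hsum := hT.linkWeight_add_le hp hadj S S
    nlinarith [mem_R.1 ha, mem_R.1 hb, mem_R.1 hc]
  · intro a ha b hb c hc hadj
    have hsum := hT.linkWeight_add_le hp hadj S Sᶜ
    rw [hρ] at hsum
    nlinarith [cross_of_mem ha, cross_of_mem hb, cross_of_mem hc]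
  · linarith [sum_le_sum_of_subset_of_nonneg hSR fun x _ _ => hp x]
  · have hsq := hT.codegWeight_sq_le hp hadj S
    have hS_small : T.codegWeight p a s S ≤ 11 / 100 := by nlinarith [mem_R.1 hb]
    linarith [codegWeight_split (T := T) (p := p) S a s, codegWeight_le (T := T) hp a s Sᶜ]

lemma IsIndep.weight_univ_eq_of_isIndep_compl {R : Finset V} (hR : T.IsIndep R)
    (hRc : T.IsIndep Rᶜ) : T.weight p univ univ univ
      = 3 * ∑ a ∈ R, p a * ∑ s ∈ Rᶜ, p s * T.codegWeight p a s univ := by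
  have hcodeg : ∑ a ∈ R, p a * ∑ s ∈ Rᶜ, p s * T.codegWeight p a s univ
      = T.weight p R Rᶜ R + T.weight p R Rᶜ Rᶜ := by
    simp only [weight, linkWeight_eq_sum_codegWeight, codegWeight_split R, mul_add,
      sum_add_distrib]
  rw [weight_split R, hR.weight_eq_zero, hRc.weight_eq_zero, hcodeg, weight_swap_left R Rᶜ R,
    weight_swap_left R Rᶜ Rᶜ]
  ring

end Classification

/-! ### Unit weights -/

lemma codegWeight_smul (c : ℝ) (x y : V) (P : Finset V) :
    T.codegWeight (c • p) x y P = c * T.codegWeight p x y P := by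
  simp only [codegWeight, Pi.smul_apply, smul_eq_mul, mul_sum, mul_assoc]

lemma linkWeight_smul (c : ℝ) (v : V) (P Q : Finset V) :
    T.linkWeight (c • p) v P Q = c ^ 2 * T.linkWeight p v P Q := by
  simp only [linkWeight, Pi.smul_apply, smul_eq_mul, mul_sum]
  exact sum_congr rfl fun x _ => sum_congr rfl fun y _ => by ring

section UnitWeight

variable [Fintype V] [DecidableEq V] {R : Finset V}

lemma codegWeight_one_le {a s : V} (hs : s ∈ Rᶜ) (h : ∀ b ∈ R, ¬ T.Adj a s b) :
    T.codegWeight 1 a s univ ≤ (#Rᶜ : ℝ) - 1 := by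
  classical
  have hsub : ({z | T.Adj a s z} : Finset V) ⊆ Rᶜ.erase s := fun z hz => by
    have hadj := (mem_filter.1 hz).2
    exact mem_erase.2 ⟨(T.ne (rotate hadj)).symm, mem_compl.2 fun hz => h z hz hadj⟩
  have hcard := card_le_card hsub
  rw [← cast_card_erase_of_mem hs, codegWeight_univ]
  simpa using hcard

lemma F32Free.exists_isIndep_codegWeight_one_lt (hT : T.F32Free)
    (hcard : 100 ≤ Fintype.card V) (hdeg : ∀ v,
      (4 / 9 - 1 / 10 ^ 32) * (Fintype.card V : ℝ) ^ 2 ≤ T.linkWeight 1 v univ univ) :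
    ∃ R, T.IsIndep R ∧ T.IsIndep Rᶜ ∧
      ∀ a s b, b ∈ R → T.Adj a s b → T.codegWeight 1 a s univ < (#Rᶜ : ℝ) - 1 := by
  obtain ⟨n, hn⟩ : ∃ n : ℝ, (Fintype.card V : ℝ) = n := ⟨_, rfl⟩
  have hn100 : 100 ≤ n := hn ▸ mod_cast hcard
  have hn0 : 0 < n := by linarith
  have hsum (P : Finset V) : ∑ v ∈ P, (n⁻¹ • (1 : V → ℝ)) v = n⁻¹ * #P := by
    simp [mul_comm]
  obtain ⟨R, hR, hRc, hlarge, hcodeg⟩ := hT.exists_isIndep_isIndep_compl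
    (p := n⁻¹ • (1 : V → ℝ)) (fun v => by simpa using hn0.le)
    (by rw [hsum, card_univ, hn, inv_mul_cancel₀ hn0.ne']) fun v => by
      rw [linkWeight_smul, inv_pow, ← div_eq_inv_mul, le_div_iff₀ (by positivity), ← hn]
      exact hdeg v
  refine ⟨R, hR, hRc, fun a s b hb hadj => ?_⟩
  have hle := hcodeg a s b hb hadj
  rw [hsum, ← div_eq_inv_mul, le_div_iff₀ hn0] at hlarge
  rw [codegWeight_smul, ← div_eq_inv_mul, div_le_iff₀ hn0] at hle
  linarith

theorem F32Free.exists_weight_one_le (hT : T.F32Free) (hcard : 100 ≤ Fintype.card V)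
    (hdeg : ∀ v,
      (4 / 9 - 1 / 10 ^ 32) * (Fintype.card V : ℝ) ^ 2 ≤ T.linkWeight 1 v univ univ) :
    ∃ R : Finset V, T.weight 1 univ univ univ ≤ 3 * (#R * (#Rᶜ * ((#Rᶜ : ℝ) - 1))) ∧
      (T.weight 1 univ univ univ = 3 * (#R * (#Rᶜ * ((#Rᶜ : ℝ) - 1))) →
        (∀ a ∈ R, ∀ b ∈ R, ∀ c, ¬ T.Adj a b c) ∧ T.IsIndep Rᶜ) := by
  obtain ⟨R, hR, hRc, hlt⟩ := hT.exists_isIndep_codegWeight_one_lt hcard hdeg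
  have hle (a : V) : ∀ s ∈ Rᶜ, T.codegWeight 1 a s univ ≤ (#Rᶜ : ℝ) - 1 := fun s hs => by
    by_cases h : ∃ b ∈ R, T.Adj a s b
    · obtain ⟨b, hb, hadj⟩ := h
      exact (hlt a s b hb hadj).le
    · push Not at h
      exact codegWeight_one_le hs h
  have hsum : ∑ a ∈ R, ∑ s ∈ Rᶜ, T.codegWeight 1 a s univ
      ≤ ∑ a ∈ R, ∑ s ∈ Rᶜ, ((#Rᶜ : ℝ) - 1) := sum_le_sum fun a _ => sum_le_sum (hle a)
  have hconst : (#R : ℝ) * (#Rᶜ * ((#Rᶜ : ℝ) - 1)) = ∑ a ∈ R, ∑ s ∈ Rᶜ, ((#Rᶜ : ℝ) - 1) := by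
    simp only [sum_const, nsmul_eq_mul]
  refine ⟨R, ?_⟩
  rw [hR.weight_univ_eq_of_isIndep_compl hRc, hconst]
  simp only [Pi.one_apply, one_mul]
  refine ⟨by linarith, fun heq => ⟨fun a ha b hb c hadj => ?_, hRc⟩⟩
  have hc : c ∈ Rᶜ := mem_compl.2 fun hc => hR a ha b hb c hc hadj
  have hstrict : ∑ a ∈ R, ∑ s ∈ Rᶜ, T.codegWeight 1 a s univ
      < ∑ a ∈ R, ∑ s ∈ Rᶜ, ((#Rᶜ : ℝ) - 1) :=
    sum_lt_sum (fun a _ => sum_le_sum (hle a))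
      ⟨a, ha, sum_lt_sum (hle a) ⟨c, hc, hlt a c b hb (T.swap_right hadj)⟩⟩
  linarith

end UnitWeight

end TripleSystem

namespace HGraph

open Finset TripleSystem

/-! ### Hypergraphs -/

section Basic

variable {r : ℕ} {F G H : HGraph r}

lemma IsCopyIn.mono (h : F.IsCopyIn G) (hverts : G.verts ⊆ H.verts) (hedges : G.edges ⊆ H.edges) :
    F.IsCopyIn H := by
  obtain ⟨f, hf, hf_verts, hf_edges⟩ := h
  exact ⟨f, hf, fun v hv => hverts (hf_verts v hv), fun e he => hedges (hf_edges e he)⟩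

lemma mem_deleteVert_edges {v : ℕ} {e : Finset ℕ} :
    e ∈ (H.deleteVert v).edges ↔ e ∈ H.edges ∧ v ∉ e := by
  simp only [deleteVert, ofEdges, mem_filter, and_iff_left_iff_imp, and_imp]
  exact fun he hv => ⟨subset_erase.2 ⟨H.edges_sub e he, hv⟩, H.edges_card e he⟩

lemma card_deleteVert_edges_add_deg (H : HGraph r) (v : ℕ) :
    #(H.deleteVert v).edges + H.deg v = #H.edges := by
  rw [add_comm, deg, ← card_filter_add_card_filter_not (s := H.edges) (v ∈ ·)]
  congr 2
  ext e
  rw [mem_deleteVert_edges, mem_filter]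

lemma not_isCopyIn_deleteVert (h : ¬ F.IsCopyIn H) (v : ℕ) : ¬ F.IsCopyIn (H.deleteVert v) :=
  fun hF => h (hF.mono (erase_subset _ _) fun _ he => (mem_deleteVert_edges.1 he).1)

lemma card_edges_le_choose (H : HGraph r) : #H.edges ≤ (#H.verts).choose r := by
  rw [← card_powersetCard]
  exact card_le_card fun e he => mem_powersetCard.2 ⟨H.edges_sub e he, H.edges_card e he⟩

lemma sum_deg (H : HGraph r) : ∑ v ∈ H.verts, H.deg v = r * #H.edges := by
  have hcard : ∀ e ∈ H.edges, #{v ∈ H.verts | v ∈ e} = r := fun e he => by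
    rw [filter_mem_eq_inter, inter_eq_right.2 (H.edges_sub e he), H.edges_card e he]
  rw [mul_comm, ← sum_const_nat hcard]
  exact sum_card_bipartiteAbove_eq_sum_card_bipartiteBelow fun v e => v ∈ e

lemma IsCopyIn.semibipartite (h : F.IsCopyIn H) (hH : Semibipartite r H) : Semibipartite r F := by
  obtain ⟨V₁, -, hV₁⟩ := hH
  obtain ⟨f, hf, -, hf_edges⟩ := h
  refine ⟨{v ∈ F.verts | f v ∈ V₁}, filter_subset _ _, fun e he => ?_⟩
  have himage : (e ∩ {v ∈ F.verts | f v ∈ V₁}).image f = e.image f ∩ V₁ := by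
    ext y
    simp only [mem_image, mem_inter, mem_filter]
    constructor
    · rintro ⟨x, ⟨hx, -, hxV⟩, rfl⟩
      exact ⟨⟨x, hx, rfl⟩, hxV⟩
    · rintro ⟨⟨x, hx, rfl⟩, hxV⟩
      exact ⟨x, ⟨hx, F.edges_sub e he hx, hxV⟩, rfl⟩
  rw [← hV₁ _ (hf_edges e he), ← himage, card_image_of_injOn]
  exact hf.mono fun x hx => F.edges_sub e he (mem_inter.1 hx).1

end Basic

/-! ### The 3-graph `𝔽_{3,2}` -/

lemma card_triple_eq_three_iff {x y z : ℕ} :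
    #{x, y, z} = 3 ↔ x ≠ y ∧ x ≠ z ∧ y ≠ z := by
  refine ⟨fun h => ⟨?_, ?_, ?_⟩, fun h => card_eq_three.2 ⟨x, y, z, h.1, h.2.1, h.2.2, rfl⟩⟩ <;>
    rintro rfl
  · rw [insert_eq_of_mem (by simp)] at h
    exact absurd card_le_two (by omega : ¬ #{x, z} ≤ 2)
  · rw [insert_eq_of_mem (by simp)] at h
    exact absurd card_le_two (by omega : ¬ #{y, x} ≤ 2)
  · rw [pair_eq_singleton] at h
    exact absurd card_le_two (by omega : ¬ #{x, y} ≤ 2)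

lemma F32_edges : F32.edges = {{1, 2, 3}, {1, 2, 4}, {1, 2, 5}, {3, 4, 5}} := by decide

lemma not_semibipartite_F32 : ¬ Semibipartite 3 F32 := by
  rintro ⟨V₁, hV₁, h⟩
  have hdecide : ∀ V ∈ (Icc 1 5).powerset, ¬ ∀ e ∈ F32.edges, #(e ∩ V) = 1 := by
    rw [F32_edges]
    decide
  exact hdecide V₁ (mem_powerset.2 hV₁) h

lemma not_isCopyIn_F32_of_semibipartite {H : HGraph 3} (hH : Semibipartite 3 H) :
    ¬ F32.IsCopyIn H :=
  fun h => not_semibipartite_F32 (h.semibipartite hH)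

lemma isCopyIn_F32_of_mem {H : HGraph 3} {x y a b c : ℕ} (ha : {x, y, a} ∈ H.edges)
    (hb : {x, y, b} ∈ H.edges) (hc : {x, y, c} ∈ H.edges) (habc : {a, b, c} ∈ H.edges) :
    F32.IsCopyIn H := by
  obtain ⟨hxy, hxa, hya⟩ := card_triple_eq_three_iff.1 (H.edges_card _ ha)
  obtain ⟨-, hxb, hyb⟩ := card_triple_eq_three_iff.1 (H.edges_card _ hb)
  obtain ⟨-, hxc, hyc⟩ := card_triple_eq_three_iff.1 (H.edges_card _ hc)
  obtain ⟨hab, hac, hbc⟩ := card_triple_eq_three_iff.1 (H.edges_card _ habc)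
  have hverts := H.edges_sub _ ha
  have hverts' := H.edges_sub _ habc
  have hF32 : F32.verts = {1, 2, 3, 4, 5} := by decide
  refine ⟨fun i => if i = 1 then x else if i = 2 then y else if i = 3 then a else
    if i = 4 then b else c, ?_, ?_, ?_⟩
  · intro i hi j hj
    simp only [hF32, coe_insert, coe_singleton, Set.mem_insert_iff, Set.mem_singleton_iff] at hi hj
    grind
  · simp only [insert_subset_iff, singleton_subset_iff] at hverts hverts'
    simp [hF32, hverts, hverts']
  · simp [F32_edges, image_insert, ha, hb, hc, habc]

section ToTripleSystem

variable {H : HGraph 3}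

/-- The triple system of a 3-graph. -/
def toTripleSystem (H : HGraph 3) : TripleSystem H.verts where
  Adj x y z := {x.1, y.1, z.1} ∈ H.edges
  swap_left h := by rwa [insert_comm]
  swap_right h := by rwa [pair_comm]
  ne h hxy := (card_triple_eq_three_iff.1 (H.edges_card _ h)).1 (congrArg Subtype.val hxy)

lemma f32Free_toTripleSystem (h : ¬ F32.IsCopyIn H) : H.toTripleSystem.F32Free :=
  fun _ _ _ _ _ ha hb hc habc => h (isCopyIn_F32_of_mem ha hb hc habc)

lemma card_filter_insert_pair_mem_edges (H : HGraph 3) (v : ℕ) :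
    #{q ∈ H.verts ×ˢ H.verts | {v, q.1, q.2} ∈ H.edges} = 2 * H.deg v := by
  have hmaps : ∀ q ∈ {q ∈ H.verts ×ˢ H.verts | {v, q.1, q.2} ∈ H.edges},
      ({v, q.1, q.2} : Finset ℕ) ∈ ({e ∈ H.edges | v ∈ e} : Finset (Finset ℕ)) :=
    fun q hq => mem_filter.2 ⟨(mem_filter.1 hq).2, mem_insert_self _ _⟩
  have hfiber : ∀ e ∈ ({e ∈ H.edges | v ∈ e} : Finset (Finset ℕ)),
      #{q ∈ {q ∈ H.verts ×ˢ H.verts | {v, q.1, q.2} ∈ H.edges} | {v, q.1, q.2} = e} = 2 := by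
    intro e he
    obtain ⟨he, hv⟩ := mem_filter.1 he
    have hcard : #(e.erase v) = 2 := by rw [card_erase_of_mem hv, H.edges_card e he]
    suffices {q ∈ {q ∈ H.verts ×ˢ H.verts | {v, q.1, q.2} ∈ H.edges} | {v, q.1, q.2} = e}
        = (e.erase v).offDiag by rw [this, offDiag_card, hcard]
    ext ⟨x, y⟩
    simp only [mem_filter, mem_product, mem_offDiag, mem_erase]
    constructor
    · rintro ⟨-, rfl⟩
      obtain ⟨hvx, hvy, hxy⟩ := card_triple_eq_three_iff.1 (H.edges_card _ he)
      simp [hvx.symm, hvy.symm, hxy]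
    · rintro ⟨⟨hxv, hx⟩, ⟨hyv, hy⟩, hxy⟩
      have heq : {v, x, y} = e := eq_of_subset_of_card_le
        (by simp [insert_subset_iff, hv, hx, hy])
        (by rw [H.edges_card e he, card_triple_eq_three_iff.2 ⟨hxv.symm, hyv.symm, hxy⟩])
      exact ⟨⟨⟨H.edges_sub e he hx, H.edges_sub e he hy⟩, heq ▸ he⟩, heq⟩
  rw [card_eq_sum_card_fiberwise hmaps, sum_const_nat hfiber, deg, mul_comm]

lemma linkWeight_one_toTripleSystem (v : H.verts) :
    H.toTripleSystem.linkWeight 1 v univ univ = 2 * (H.deg v : ℝ) := by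
  classical
  have hcard := congrArg (Nat.cast (R := ℝ)) (H.card_filter_insert_pair_mem_edges v)
  rw [card_filter, sum_product] at hcard
  push_cast at hcard
  rw [← hcard, ← sum_coe_sort H.verts]
  refine sum_congr rfl fun x _ => ?_
  rw [← sum_coe_sort H.verts]
  refine sum_congr rfl fun y _ => ?_
  rw [Pi.one_apply, Pi.one_apply, one_mul, one_mul]
  exact if_congr Iff.rfl rfl rfl

lemma weight_one_toTripleSystem (H : HGraph 3) :
    H.toTripleSystem.weight 1 univ univ univ = 6 * (#H.edges : ℝ) := by
  have hsum := congrArg (Nat.cast (R := ℝ)) H.sum_deg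
  push_cast at hsum
  simp only [weight, Pi.one_apply, one_mul, linkWeight_one_toTripleSystem]
  rw [← mul_sum, sum_coe_sort H.verts fun v => (H.deg v : ℝ), hsum]
  ring

end ToTripleSystem

/-! ### The Turán number of `𝔽_{3,2}` -/

/-- The maximum number of edges of a semibipartite 3-graph on `n` vertices, that is, the number of
edges of `S_3(n)`. -/
def semibipartiteMax (n : ℕ) : ℕ := (range (n + 1)).sup fun a => a * (n - a).choose 2

lemma mul_choose_le_semibipartiteMax {n a b : ℕ} (h : a + b = n) :
    a * b.choose 2 ≤ semibipartiteMax n := by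
  obtain rfl : b = n - a := by omega
  exact le_sup (f := fun a => a * (n - a).choose 2) (mem_range.2 (by omega))

lemma exists_semibipartiteMax_eq (n : ℕ) :
    ∃ a b, a + b = n ∧ semibipartiteMax n = a * b.choose 2 := by
  obtain ⟨a, ha, h⟩ := exists_mem_eq_sup (range (n + 1)) nonempty_range_add_one
    fun a => a * (n - a).choose 2
  exact ⟨a, n - a, Nat.add_sub_cancel' (Nat.lt_succ_iff.1 (mem_range.1 ha)), h⟩

lemma le_semibipartiteMax (k : ℕ) : 2 / 27 * (k : ℝ) ^ 3 - (k : ℝ) ^ 2 ≤ semibipartiteMax k := by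
  obtain hk | hk := le_or_gt k 13
  · have hk' : (k : ℝ) ≤ 13 := by exact_mod_cast hk
    nlinarith [sq_nonneg (k : ℝ), (semibipartiteMax k).cast_nonneg (α := ℝ)]
  obtain ⟨a, b, hab, ha, hb⟩ : ∃ a b, a + b = k ∧ k ≤ 3 * a + 2 ∧ 2 * k ≤ 3 * b :=
    ⟨k / 3, k - k / 3, by omega, by omega, by omega⟩
  have hmax : (a : ℝ) * (b.choose 2 : ℕ) ≤ semibipartiteMax k := by
    exact_mod_cast mul_choose_le_semibipartiteMax hab
  rw [Nat.cast_choose_two] at hmax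
  have hk' : (13 : ℝ) < k := by exact_mod_cast hk
  have ha' : ((k : ℝ) - 2) / 3 ≤ a := by
    have : (k : ℝ) ≤ 3 * a + 2 := by exact_mod_cast ha
    linarith
  have hb' : 2 * (k : ℝ) / 3 ≤ b := by
    have : 2 * (k : ℝ) ≤ 3 * b := by exact_mod_cast hb
    linarith
  have hbb : 2 * (k : ℝ) / 3 * (2 * (k : ℝ) / 3 - 1) ≤ b * (b - 1) :=
    mul_le_mul hb' (by linarith) (by linarith) (by linarith)
  have habb : ((k : ℝ) - 2) / 3 * (2 * (k : ℝ) / 3 * (2 * (k : ℝ) / 3 - 1)) ≤ a * (b * (b - 1)) :=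
    mul_le_mul ha' hbb (mul_nonneg (by linarith) (by linarith)) (by linarith)
  nlinarith

lemma semibipartiteMax_le_succ (k : ℕ) : semibipartiteMax k ≤ semibipartiteMax (k + 1) := by
  obtain ⟨a, b, hab, hmax⟩ := exists_semibipartiteMax_eq k
  rw [hmax]
  exact (Nat.mul_le_mul_right _ a.le_succ).trans (mul_choose_le_semibipartiteMax (by omega))

-- Adding a vertex to either part `a`, `b` of an extremal partition gains `b.choose 2` or `a * b`.
lemma three_mul_semibipartiteMax_le (k : ℕ) :
    3 * (semibipartiteMax k : ℝ) ≤ k * ((semibipartiteMax (k + 1) : ℝ) - semibipartiteMax k) := by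
  obtain ⟨a, b, rfl, hmax⟩ := exists_semibipartiteMax_eq k
  have ha : ((a + 1 : ℕ) : ℝ) * (b.choose 2 : ℕ) ≤ semibipartiteMax (a + b + 1) := by
    exact_mod_cast mul_choose_le_semibipartiteMax (by omega)
  have hb : (a : ℝ) * ((b + 1).choose 2 : ℕ) ≤ semibipartiteMax (a + b + 1) := by
    exact_mod_cast mul_choose_le_semibipartiteMax (by omega)
  have hmax' : (semibipartiteMax (a + b) : ℝ) = a * (b * (b - 1) / 2) := by
    rw [hmax, Nat.cast_mul, Nat.cast_choose_two]
  rw [Nat.cast_choose_two] at ha hb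
  push_cast at ha hb
  rw [hmax']
  push_cast
  set D : ℝ := semibipartiteMax (a + b + 1) - a * (b * (b - 1) / 2) with hD
  have haD : (b : ℝ) * (b - 1) / 2 ≤ D := by linarith
  have hbD : (a : ℝ) * b ≤ D := by linarith
  have ha₀ : (0 : ℝ) ≤ a := Nat.cast_nonneg a
  have hb₀ : (0 : ℝ) ≤ b := Nat.cast_nonneg b
  nlinarith [mul_le_mul_of_nonneg_left haD ha₀, mul_le_mul_of_nonneg_left hbD hb₀,
    mul_nonneg ha₀ hb₀]

lemma semibipartiteMax_add_le_succ (k : ℕ) :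
    (semibipartiteMax k : ℝ) + (2 / 9 * (k : ℝ) ^ 2 - 3 * k) ≤ semibipartiteMax (k + 1) := by
  obtain rfl | hk := Nat.eq_zero_or_pos k
  · simpa using semibipartiteMax_le_succ 0
  have hk' : (0 : ℝ) < k := by exact_mod_cast hk
  have hstep := three_mul_semibipartiteMax_le k
  have hlower := le_semibipartiteMax k
  have : (2 / 9 * (k : ℝ) ^ 2 - 3 * k) ≤ (semibipartiteMax (k + 1) : ℝ) - semibipartiteMax k :=
    le_of_mul_le_mul_left (by linarith) hk'
  linarith

lemma low_degree_add_semibipartiteMax_le {k : ℕ} (hk : 10 ^ 34 ≤ k) :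
    (4 / 9 - 1 / 10 ^ 32) * ((k : ℝ) + 1) ^ 2 / 2 + semibipartiteMax k ≤
      semibipartiteMax (k + 1) := by
  have hstep := semibipartiteMax_add_le_succ k
  have hk' : (10 : ℝ) ^ 34 ≤ k := by exact_mod_cast hk
  generalize (k : ℝ) = x at *
  norm_num at hk' ⊢
  nlinarith

lemma semibipartite_of_isIndep_compl {H : HGraph 3} {R : Finset H.verts}
    (hR : ∀ a ∈ R, ∀ b ∈ R, ∀ c, ¬ H.toTripleSystem.Adj a b c)
    (hRc : H.toTripleSystem.IsIndep Rᶜ) : Semibipartite 3 H := by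
  refine ⟨R.map (Function.Embedding.subtype _), fun x hx => ?_, fun e he => ?_⟩
  · obtain ⟨y, -, rfl⟩ := mem_map.1 hx
    exact y.2
  obtain ⟨x, y, z, hxy, hxz, hyz, rfl⟩ := card_eq_three.1 (H.edges_card e he)
  have hsub := H.edges_sub _ he
  simp only [insert_subset_iff, singleton_subset_iff] at hsub
  lift x to H.verts using hsub.1
  lift y to H.verts using hsub.2.1
  lift z to H.verts using hsub.2.2
  have hadj : H.toTripleSystem.Adj x y z := he
  have hRxy : ¬ (x ∈ R ∧ y ∈ R) := fun h => hR _ h.1 _ h.2 _ hadj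
  have hRxz : ¬ (x ∈ R ∧ z ∈ R) := fun h => hR _ h.1 _ h.2 _ (H.toTripleSystem.swap_right hadj)
  have hRyz : ¬ (y ∈ R ∧ z ∈ R) := fun h =>
    hR _ h.1 _ h.2 _ (H.toTripleSystem.swap_right (H.toTripleSystem.swap_left hadj))
  have hRc' : ¬ (x ∉ R ∧ y ∉ R ∧ z ∉ R) := fun h =>
    hRc x (mem_compl.2 h.1) y (mem_compl.2 h.2.1) z (mem_compl.2 h.2.2) hadj
  have hmem : ∀ u : H.verts, u.1 ∈ R.map (Function.Embedding.subtype _) ↔ u ∈ R :=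
    fun u => mem_map' _
  rw [← filter_mem_eq_inter, card_filter, sum_insert (by simp [hxy, hxz]),
    sum_insert (by simp [hyz]), sum_singleton]
  simp only [hmem]
  grind

lemma card_edges_le_semibipartiteMax_of_deg {H : HGraph 3} (hH : ¬ F32.IsCopyIn H)
    (hcard : 100 ≤ #H.verts)
    (hdeg : ∀ v ∈ H.verts, (4 / 9 - 1 / 10 ^ 32) * (#H.verts : ℝ) ^ 2 ≤ 2 * (H.deg v : ℝ)) :
    #H.edges ≤ semibipartiteMax #H.verts ∧
      (#H.edges = semibipartiteMax #H.verts → Semibipartite 3 H) := by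
  obtain ⟨R, hle, heq⟩ := (f32Free_toTripleSystem hH).exists_weight_one_le
    (by rwa [Fintype.card_coe])
    fun v => by rw [linkWeight_one_toTripleSystem, Fintype.card_coe]; exact hdeg v.1 v.2
  rw [weight_one_toTripleSystem] at hle heq
  have hmax : (#R : ℝ) * ((#Rᶜ).choose 2 : ℕ) ≤ semibipartiteMax #H.verts := by
    exact_mod_cast mul_choose_le_semibipartiteMax
      ((card_add_card_compl R).trans (Fintype.card_coe H.verts))
  rw [Nat.cast_choose_two] at hmax
  refine ⟨?_, fun hedges => ?_⟩
  · have : (#H.edges : ℝ) ≤ semibipartiteMax #H.verts := by linarith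
    exact_mod_cast this
  · have hedges' : (#H.edges : ℝ) = semibipartiteMax #H.verts := by exact_mod_cast hedges
    obtain ⟨hR, hRc⟩ := heq (by linarith)
    exact semibipartite_of_isIndep_compl hR hRc

lemma card_edges_le_semibipartiteMax_or_exists_deg_lt {H : HGraph 3} {k : ℕ}
    (hH : ¬ F32.IsCopyIn H) (hcard : #H.verts = k + 1) (hk : 10 ^ 34 ≤ k) :
    (#H.edges ≤ semibipartiteMax (k + 1) ∧
        (#H.edges = semibipartiteMax (k + 1) → Semibipartite 3 H)) ∨
      ∃ v ∈ H.verts, H.deg v + semibipartiteMax k < semibipartiteMax (k + 1) := by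
  by_cases hdeg : ∀ v ∈ H.verts, (4 / 9 - 1 / 10 ^ 32) * (#H.verts : ℝ) ^ 2 ≤ 2 * (H.deg v : ℝ)
  · exact .inl (hcard ▸ card_edges_le_semibipartiteMax_of_deg hH (by omega) hdeg)
  · push Not at hdeg
    obtain ⟨v, hv, hdeg⟩ := hdeg
    have hmax := low_degree_add_semibipartiteMax_le hk
    rw [hcard] at hdeg
    push_cast at hdeg
    have : (H.deg v : ℝ) + semibipartiteMax k < semibipartiteMax (k + 1) := by linarith
    exact .inr ⟨v, hv, by exact_mod_cast this⟩

-- Each deletion of a low-degree vertex improves the trivial bound at size `N` by one.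
lemma card_edges_le_semibipartiteMax_add {N k : ℕ} (hN : 10 ^ 34 ≤ N) (hk : N ≤ k) {H : HGraph 3}
    (hcard : #H.verts = k) (hH : ¬ F32.IsCopyIn H) :
    #H.edges ≤ semibipartiteMax k + (N ^ 3 - (k - N)) := by
  induction k, hk using Nat.le_induction generalizing H with
  | base =>
    have hchoose := (card_edges_le_choose H).trans (Nat.choose_le_pow _ 3)
    rw [hcard] at hchoose
    omega
  | succ k hk ih =>
    obtain ⟨hle, -⟩ | ⟨v, hv, hdeg⟩ :=
      card_edges_le_semibipartiteMax_or_exists_deg_lt hH hcard (hN.trans hk)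
    · omega
    · have hdelete := ih (H := H.deleteVert v)
        ((card_erase_of_mem hv).trans (by omega)) (not_isCopyIn_deleteVert hH v)
      have hedges := card_deleteVert_edges_add_deg H v
      omega

theorem exists_forall_card_edges_le_semibipartiteMax :
    ∃ N : ℕ, ∀ H : HGraph 3, N ≤ #H.verts → ¬ F32.IsCopyIn H →
      #H.edges ≤ semibipartiteMax #H.verts ∧
        (#H.edges = semibipartiteMax #H.verts → Semibipartite 3 H) := by
  obtain ⟨N, hN⟩ : ∃ N, 10 ^ 34 ≤ N := ⟨_, le_rfl⟩
  refine ⟨N + N ^ 3 + 1, fun H hcard hH => ?_⟩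
  obtain ⟨k, hk⟩ : ∃ k, #H.verts = k + 1 := ⟨#H.verts - 1, by omega⟩
  rw [hk]
  obtain h | ⟨v, hv, hdeg⟩ :=
    card_edges_le_semibipartiteMax_or_exists_deg_lt hH hk (by omega : 10 ^ 34 ≤ k)
  · exact h
  · have hdelete := card_edges_le_semibipartiteMax_add hN (by omega : N ≤ k)
      (H := H.deleteVert v) ((card_erase_of_mem hv).trans (by omega))
      (not_isCopyIn_deleteVert hH v)
    have hedges := card_deleteVert_edges_add_deg H v
    omega

/-! ### Induced subgraphs and matchings -/

section Matching

variable {r : ℕ} {F G H : HGraph r}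

lemma ext (hverts : G.verts = H.verts) (hedges : G.edges = H.edges) : G = H := by
  cases G
  cases H
  congr

lemma mem_induce_edges {U e : Finset ℕ} : e ∈ (H.induce U).edges ↔ e ∈ H.edges ∧ e ⊆ U := by
  simp only [induce, ofEdges, mem_filter, and_iff_left_iff_imp, and_imp]
  exact fun he hU => ⟨subset_inter (H.edges_sub e he) hU, H.edges_card e he⟩

lemma induce_verts_self (H : HGraph r) : H.induce H.verts = H :=
  ext (inter_self _) <| Finset.ext fun e => by
    rw [mem_induce_edges, and_iff_left_of_imp (H.edges_sub e)]

lemma card_verts_induce_sdiff {B : Finset ℕ} (hB : B ⊆ H.verts) :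
    #(H.induce (H.verts \ B)).verts + #B = #H.verts := by
  rw [← card_sdiff_add_card_eq_card hB]
  congr 2
  exact inter_eq_right.2 sdiff_subset

lemma mem_induce_sdiff_edges_or_exists_mem {e : Finset ℕ} (he : e ∈ H.edges) (B : Finset ℕ) :
    e ∈ (H.induce (H.verts \ B)).edges ∨ ∃ v ∈ B, v ∈ e := by
  refine or_iff_not_imp_right.2 fun h => mem_induce_edges.2 ⟨he, ?_⟩
  push Not at h
  exact subset_sdiff.2 ⟨H.edges_sub e he, disjoint_right.2 h⟩

lemma card_edges_le_card_edges_induce_add (H : HGraph r) (B : Finset ℕ) :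
    #H.edges ≤ #(H.induce (H.verts \ B)).edges + ∑ v ∈ B, H.deg v := by
  have hsub : H.edges ⊆ (H.induce (H.verts \ B)).edges ∪
      B.biUnion fun v => {e ∈ H.edges | v ∈ e} := by
    intro e he
    rw [mem_union, mem_biUnion]
    refine (mem_induce_sdiff_edges_or_exists_mem he B).imp_right ?_
    rintro ⟨v, hv, hve⟩
    exact ⟨v, hv, mem_filter.2 ⟨he, hve⟩⟩
  exact (card_le_card hsub).trans ((card_union_le _ _).trans (by gcongr; exact card_biUnion_le))

lemma card_filter_mem_and_mem_le (H : HGraph r) {u v : ℕ} (huv : u ≠ v) :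
    #{e ∈ H.edges | v ∈ e ∧ u ∈ e} ≤ (#H.verts).choose (r - 2) := by
  rw [← card_powersetCard]
  refine card_le_card_of_injOn (fun e => (e.erase u).erase v) (fun e he => ?_)
    fun e he e' he' hee' => ?_
  · obtain ⟨he, hv, hu⟩ := mem_filter.1 he
    refine mem_powersetCard.2 ⟨(erase_subset _ _).trans ((erase_subset _ _).trans
      (H.edges_sub e he)), ?_⟩
    rw [card_erase_of_mem (mem_erase.2 ⟨huv.symm, hv⟩), card_erase_of_mem hu, H.edges_card e he]
    omega
  · obtain ⟨-, hv, hu⟩ := mem_filter.1 he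
    obtain ⟨-, hv', hu'⟩ := mem_filter.1 he'
    rw [← insert_erase hu, ← insert_erase (mem_erase.2 ⟨huv.symm, hv⟩), ← insert_erase hu',
      ← insert_erase (mem_erase.2 ⟨huv.symm, hv'⟩)]
    exact congrArg (fun s => insert u (insert v s)) hee'

lemma deg_le_deg_induce_add (H : HGraph r) {B : Finset ℕ} {v : ℕ} (hv : v ∉ B) :
    H.deg v ≤ (H.induce (H.verts \ B)).deg v + #B * (#H.verts).choose (r - 2) := by
  have hsub : {e ∈ H.edges | v ∈ e} ⊆ {e ∈ (H.induce (H.verts \ B)).edges | v ∈ e} ∪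
      B.biUnion fun u => {e ∈ H.edges | v ∈ e ∧ u ∈ e} := by
    intro e he
    obtain ⟨he, hve⟩ := mem_filter.1 he
    rw [mem_union, mem_biUnion, mem_filter]
    refine (mem_induce_sdiff_edges_or_exists_mem he B).imp (fun h => ⟨h, hve⟩) ?_
    rintro ⟨u, hu, hue⟩
    exact ⟨u, hu, mem_filter.2 ⟨he, hve, hue⟩⟩
  refine (card_le_card hsub).trans ((card_union_le _ _).trans (Nat.add_le_add_left ?_ _))
  exact card_biUnion_le_card_mul _ _ _ fun u hu =>
    H.card_filter_mem_and_mem_le fun huv => hv (huv ▸ hu)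

lemma card_filter_mem_powersetCard {U : Finset ℕ} {v : ℕ} (hv : v ∈ U) (hr : 0 < r) :
    #{e ∈ powersetCard r U | v ∈ e} = (#U - 1).choose (r - 1) := by
  simpa only [singleton_subset_iff, card_singleton] using
    card_filter_powersetCard_subset {v} U r (singleton_subset_iff.2 hv) hr

lemma filter_mem_edges_subset (H : HGraph r) (v : ℕ) :
    {e ∈ H.edges | v ∈ e} ⊆ {e ∈ powersetCard r H.verts | v ∈ e} :=
  filter_subset_filter _ fun e he => mem_powersetCard.2 ⟨H.edges_sub e he, H.edges_card e he⟩

lemma deg_le_choose {v : ℕ} (hv : v ∈ H.verts) (hr : 0 < r) :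
    H.deg v ≤ (#H.verts - 1).choose (r - 1) := by
  rw [← card_filter_mem_powersetCard hv hr]
  exact card_le_card (H.filter_mem_edges_subset v)

lemma mem_edges_of_deg_eq {v : ℕ} (hv : v ∈ H.verts) (hr : 0 < r)
    (hdeg : H.deg v = (#H.verts - 1).choose (r - 1)) {e : Finset ℕ} (he : e ⊆ H.verts)
    (hcard : #e = r) (hve : v ∈ e) : e ∈ H.edges := by
  have hstar := eq_of_subset_of_card_le (H.filter_mem_edges_subset v)
    (by rw [card_filter_mem_powersetCard hv hr, ← hdeg, deg])
  have : e ∈ {e ∈ H.edges | v ∈ e} := hstar ▸ mem_filter.2 ⟨mem_powersetCard.2 ⟨he, hcard⟩, hve⟩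
  exact (mem_filter.1 this).1

lemma IsCopyIn.exists_card_eq {U : Finset ℕ} (h : F.IsCopyIn (H.induce U)) :
    ∃ A ⊆ H.verts ∩ U, #A = #F.verts ∧ F.IsCopyIn (H.induce A) := by
  obtain ⟨f, hf, hf_verts, hf_edges⟩ := h
  refine ⟨F.verts.image f, image_subset_iff.2 hf_verts, card_image_of_injOn hf, f, hf,
    fun v hv => mem_inter.2 ⟨(mem_inter.1 (hf_verts v hv)).1, mem_image_of_mem f hv⟩,
    fun e he => mem_induce_edges.2 ⟨(mem_induce_edges.1 (hf_edges e he)).1,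
      image_subset_image (F.edges_sub e he)⟩⟩

lemma IsCopyIn.induce_mono {U U' : Finset ℕ} (h : F.IsCopyIn (G.induce U))
    (hverts : G.verts ⊆ H.verts) (hedges : G.edges ⊆ H.edges) (hU : U ⊆ U') :
    F.IsCopyIn (H.induce U') := by
  refine h.mono (inter_subset_inter hverts hU) fun e he => ?_
  rw [mem_induce_edges] at he ⊢
  exact ⟨hedges he.1, he.2.trans hU⟩

/-- The sets `S i` carry pairwise vertex-disjoint copies of `F` in `H`; an `F`-matching of size `k`,
as in `HasMatching`. -/
def IsMatching (F H : HGraph r) {k : ℕ} (S : Fin k → Finset ℕ) : Prop :=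
  (∀ i, S i ⊆ H.verts ∧ #(S i) = #F.verts) ∧ (∀ i j, i ≠ j → Disjoint (S i) (S j)) ∧
    ∀ i, F.IsCopyIn (H.induce (S i))

variable {k : ℕ} {S : Fin k → Finset ℕ}

lemma IsMatching.mono (hS : F.IsMatching G S) (hverts : G.verts ⊆ H.verts)
    (hedges : G.edges ⊆ H.edges) : F.IsMatching H S :=
  ⟨fun i => ⟨(hS.1 i).1.trans hverts, (hS.1 i).2⟩, hS.2.1,
    fun i => (hS.2.2 i).induce_mono hverts hedges subset_rfl⟩

lemma IsMatching.biUnion_subset (hS : F.IsMatching H S) : univ.biUnion S ⊆ H.verts :=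
  Finset.biUnion_subset.2 fun i _ => (hS.1 i).1

lemma IsMatching.card_biUnion (hS : F.IsMatching H S) : #(univ.biUnion S) = #F.verts * k := by
  rw [Finset.card_biUnion fun i _ j _ => hS.2.1 i j, sum_congr rfl fun i _ => (hS.1 i).2,
    sum_const, card_univ, Fintype.card_fin, smul_eq_mul, mul_comm]

lemma IsMatching.hasMatching_succ (hS : F.IsMatching H S)
    (h : F.IsCopyIn (H.induce (H.verts \ univ.biUnion S))) : F.HasMatching H (k + 1) := by
  obtain ⟨A, hA, hcard, hcopy⟩ := h.exists_card_eq
  have hdisj : ∀ i, Disjoint A (S i) := fun i =>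
    (disjoint_sdiff_self_left.mono_left (hA.trans inter_subset_right)).mono_right
      (subset_biUnion_of_mem S (mem_univ i))
  refine ⟨Fin.cons A S, Fin.cases ⟨hA.trans inter_subset_left, hcard⟩ hS.1, ?_,
    Fin.cases hcopy hS.2.2⟩
  refine Fin.cases (Fin.cases (fun h => absurd rfl h) fun j _ => hdisj j) fun i =>
    Fin.cases (fun _ => (hdisj i).symm) fun j hij => hS.2.1 i j fun h => hij (h ▸ rfl)

lemma exists_card_le_not_isCopyIn_induce_sdiff {t : ℕ} (h : ¬ F.HasMatching H (t + 1)) :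
    ∃ B ⊆ H.verts, #B ≤ #F.verts * t ∧ ¬ F.IsCopyIn (H.induce (H.verts \ B)) := by
  by_contra! hcopy
  suffices ∀ k ≤ t + 1, F.HasMatching H k from h (this _ le_rfl)
  intro k hk
  induction k with
  | zero => exact ⟨fun _ => ∅, fun i => i.elim0, fun i => i.elim0, fun i => i.elim0⟩
  | succ k ih =>
    obtain ⟨S, hS⟩ : ∃ S : Fin k → Finset ℕ, F.IsMatching H S := ih (by omega)
    exact hS.hasMatching_succ (hcopy _ hS.biUnion_subset
      (hS.card_biUnion.trans_le (Nat.mul_le_mul_left _ (by omega))))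

end Matching

/-! ### Joins and isomorphisms -/

section Iso

variable {r k : ℕ} {F G H : HGraph r}

lemma Iso.card_verts_eq (h : G.Iso H) : #G.verts = #H.verts := by
  obtain ⟨f, hf, -⟩ := h
  rw [← card_image_of_injOn hf.injOn]
  exact congrArg card (coe_injective (by rw [coe_image, hf.image_eq]))

lemma Iso.card_edges_eq (h : G.Iso H) : #G.edges = #H.edges := by
  obtain ⟨f, hf, hedges⟩ := h
  have hverts : G.verts.image f = H.verts := coe_injective (by rw [coe_image, hf.image_eq])
  refine card_nbij (·.image f) (fun e he => ?_) (fun e he e' he' hee' => ?_) fun e he => ?_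
  · exact (hedges e (mem_powersetCard.2 ⟨G.edges_sub e he, G.edges_card e he⟩)).1 he
  · rw [← coe_inj, coe_image, coe_image] at hee'
    exact coe_injective
      ((hf.injOn.image_eq_image_iff (G.edges_sub e he) (G.edges_sub e' he')).1 hee')
  · obtain ⟨e, he', rfl⟩ := subset_image_iff.1 (hverts ▸ H.edges_sub e he)
    have hcard := H.edges_card _ he
    rw [card_image_of_injOn (hf.injOn.mono he')] at hcard
    exact ⟨e, (hedges e (mem_powersetCard.2 ⟨mod_cast he', hcard⟩)).2 he, rfl⟩

lemma Iso.hasMatching (h : G.Iso H) (hF : F.HasMatching G k) : F.HasMatching H k := by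
  obtain ⟨f, hf, hedges⟩ := h
  obtain ⟨S, hS, hdisj, hcopy⟩ := hF
  refine ⟨fun i => (S i).image f, fun i => ⟨?_, ?_⟩, fun i j hij => ?_, fun i => ?_⟩
  · exact image_subset_iff.2 fun v hv => hf.mapsTo ((hS i).1 hv)
  · rw [card_image_of_injOn (hf.injOn.mono (hS i).1), (hS i).2]
  · rw [disjoint_iff_inter_eq_empty, ← image_inter_of_injOn _ _
      (hf.injOn.mono (Set.union_subset (hS i).1 (hS j).1)),
      disjoint_iff_inter_eq_empty.1 (hdisj i j hij), image_empty]
  · obtain ⟨g, hg, hg_verts, hg_edges⟩ := hcopy i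
    have hg_mem (v) (hv : v ∈ F.verts) := mem_inter.1 (hg_verts v hv)
    refine ⟨f ∘ g, hf.injOn.comp hg fun v hv => (hg_mem v hv).1, fun v hv => ?_, fun e he => ?_⟩
    · exact mem_inter.2 ⟨hf.mapsTo (hg_mem v hv).1, mem_image_of_mem f (hg_mem v hv).2⟩
    · obtain ⟨heG, heS⟩ := mem_induce_edges.1 (hg_edges e he)
      rw [← image_image]
      refine mem_induce_edges.2 ⟨?_, image_subset_image heS⟩
      exact (hedges _ (mem_powersetCard.2 ⟨G.edges_sub _ heG, G.edges_card _ heG⟩)).1 heG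

/-- The image of `H` under a relabelling of the vertices. -/
def map (H : HGraph r) (f : ℕ ↪ ℕ) : HGraph r where
  verts := H.verts.map f
  edges := H.edges.map (mapEmbedding f).toEmbedding
  edges_sub := forall_mem_map.2 fun e he => map_subset_map.2 (H.edges_sub e he)
  edges_card := forall_mem_map.2 fun e he => (card_map f).trans (H.edges_card e he)

variable {f : ℕ ↪ ℕ}

lemma map_mem_map_edges {e : Finset ℕ} : e.map f ∈ (H.map f).edges ↔ e ∈ H.edges :=
  mem_map' (mapEmbedding f).toEmbedding

lemma iso_map (H : HGraph r) (f : ℕ ↪ ℕ) : H.Iso (H.map f) := by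
  refine ⟨f, ?_, fun e _ => by rw [← map_eq_image, map_mem_map_edges]⟩
  rw [map, coe_map]
  exact f.injective.injOn.bijOn_image

lemma semibipartite_map (h : Semibipartite r H) (f : ℕ ↪ ℕ) : Semibipartite r (H.map f) := by
  obtain ⟨V, hV, hedges⟩ := h
  refine ⟨V.map f, map_subset_map.2 hV, forall_mem_map.2 fun e he => ?_⟩
  exact (congrArg card (Finset.map_inter e V)).symm.trans ((card_map f).trans (hedges e he))

end Iso

section Join

variable {r : ℕ} {F G : HGraph r} {L : Finset ℕ}

lemma mem_join_completeOn (hr : 0 < r) {e : Finset ℕ} :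
    e ∈ ((completeOn r L).join G).edges ↔
      (e ⊆ L ∪ G.verts ∧ #e = r) ∧ ((e ∩ L).Nonempty ∨ e ∈ G.edges) := by
  rw [join, completeOn, ofEdges, ofEdges]
  simp only [mem_filter, mem_union, mem_powersetCard]
  refine ⟨?_, ?_⟩
  · rintro ⟨(⟨⟨heL, hcard⟩, -⟩ | heG) | ⟨-, heL, -⟩, he⟩
    · exact ⟨he, .inl (by rw [inter_eq_left.2 heL]; exact card_pos.1 (hcard ▸ hr))⟩
    · exact ⟨he, .inr heG⟩
    · exact ⟨he, .inl heL⟩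
  · rintro ⟨he, heL | heG⟩
    · by_cases hne : (e ∩ G.verts).Nonempty
      · exact ⟨.inr ⟨he, heL, hne⟩, he⟩
      · have hsub : e ⊆ L := (disjoint_iff_inter_eq_empty.2
          (not_nonempty_iff_eq_empty.1 hne)).left_le_of_le_sup_right he.1
        exact ⟨.inl (.inl ⟨⟨hsub, he.2⟩, hsub, he.2⟩), he⟩
    · exact ⟨.inl (.inr heG), he⟩

lemma card_verts_join_completeOn (h : Disjoint G.verts L) :
    #((completeOn r L).join G).verts = #G.verts + #L := by
  rw [add_comm, ← card_union_of_disjoint h.symm]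
  rfl

lemma join_completeOn_edges (hr : 0 < r) :
    ((completeOn r L).join G).edges =
      {e ∈ powersetCard r (L ∪ G.verts) | (e ∩ L).Nonempty} ∪ G.edges := by
  ext e
  rw [mem_join_completeOn hr, mem_union, mem_filter, mem_powersetCard, and_or_left,
    and_iff_right_of_imp (b := e ∈ G.edges) fun he =>
      ⟨(G.edges_sub e he).trans subset_union_right, G.edges_card e he⟩]

lemma filter_disjoint_powersetCard_union {U : Finset ℕ} (h : Disjoint U L) :
    {e ∈ powersetCard r (L ∪ U) | ¬ (e ∩ L).Nonempty} = powersetCard r U := by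
  ext e
  rw [mem_filter, mem_powersetCard, mem_powersetCard, not_nonempty_iff_eq_empty,
    ← disjoint_iff_inter_eq_empty]
  exact ⟨fun ⟨⟨he, hcard⟩, heL⟩ => ⟨heL.left_le_of_le_sup_left he, hcard⟩,
    fun ⟨he, hcard⟩ => ⟨⟨he.trans subset_union_right, hcard⟩, h.mono_left he⟩⟩

lemma card_edges_join_completeOn (hr : 0 < r) (h : Disjoint G.verts L) :
    #((completeOn r L).join G).edges + (#G.verts).choose r =
      #G.edges + (#G.verts + #L).choose r := by
  have hdisj : Disjoint {e ∈ powersetCard r (L ∪ G.verts) | (e ∩ L).Nonempty} G.edges :=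
    disjoint_left.2 fun e he heG => (mem_filter.1 he).2.ne_empty
      (disjoint_iff_inter_eq_empty.1 (h.mono_left (G.edges_sub e heG)))
  have hsplit := card_filter_add_card_filter_not (s := powersetCard r (L ∪ G.verts))
    fun e => (e ∩ L).Nonempty
  rw [filter_disjoint_powersetCard_union h, card_powersetCard, card_powersetCard,
    card_union_of_disjoint h.symm, add_comm #L] at hsplit
  rw [join_completeOn_edges hr, card_union_of_disjoint hdisj]
  omega

lemma exists_disjoint_of_card_lt {k : ℕ} {S : Fin k → Finset ℕ}
    (hS : ∀ i j, i ≠ j → Disjoint (S i) (S j)) (hL : #L < k) : ∃ i, Disjoint (S i) L := by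
  by_contra! h
  simp only [not_disjoint_iff] at h
  choose x hx hxL using h
  obtain ⟨i, -, j, -, hij, hxij⟩ := exists_ne_map_eq_of_card_lt_of_maps_to
    (s := univ) (by rwa [card_univ, Fintype.card_fin]) fun i _ => hxL i
  exact disjoint_left.1 (hS i j hij) (hx i) (hxij ▸ hx j)

lemma not_hasMatching_join_completeOn (hr : 0 < r) (h : ¬ F.IsCopyIn G) :
    ¬ F.HasMatching ((completeOn r L).join G) (#L + 1) := by
  rintro ⟨S, -, hS, hcopy⟩
  obtain ⟨i, hi⟩ := exists_disjoint_of_card_lt hS (Nat.lt_succ_self _)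
  refine h ((hcopy i).mono (fun v hv => ?_) fun e he => ?_)
  · obtain ⟨hv, hvS⟩ := mem_inter.1 hv
    exact (mem_union.1 hv).resolve_left (disjoint_left.1 hi hvS)
  · obtain ⟨he, heS⟩ := mem_induce_edges.1 he
    refine ((mem_join_completeOn hr).1 he).2.resolve_left ?_
    exact not_nonempty_iff_eq_empty.2 (disjoint_iff_inter_eq_empty.1 (hi.mono_left heS))

lemma map_join_completeOn (hr : 0 < r) (f : ℕ ↪ ℕ) :
    ((completeOn r L).join G).map f = (completeOn r (L.map f)).join (G.map f) := by
  refine ext (map_union L G.verts) (Finset.ext fun e' => ?_)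
  by_cases h : ∃ e : Finset ℕ, e.map f = e'
  · obtain ⟨e, rfl⟩ := h
    rw [map_mem_map_edges, mem_join_completeOn hr, mem_join_completeOn hr, map_mem_map_edges,
      ← Finset.map_inter, map_nonempty, card_map, map, ← map_union, map_subset_map]
  · refine iff_of_false (fun he => ?_) fun he => ?_
    · obtain ⟨e, -, rfl⟩ := mem_map.1 he
      exact h ⟨e, rfl⟩
    · have hsub := ((mem_join_completeOn hr).1 he).1.1
      rw [map, ← map_union, subset_map_iff] at hsub
      obtain ⟨e, -, rfl⟩ := hsub
      exact h ⟨e, rfl⟩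

end Join

lemma exists_perm_map_eq {A B : Finset ℕ} (h : #A = #B) :
    ∃ σ : Equiv.Perm ℕ, A.map σ.toEmbedding = B := by
  have := Set.powersetCard.isPretransitive (α := ℕ) (n := #B)
  obtain ⟨σ, hσ⟩ := MulAction.exists_smul_eq (Equiv.Perm ℕ)
    (⟨A, h⟩ : Set.powersetCard ℕ #B) ⟨B, rfl⟩
  refine ⟨σ, ?_⟩
  rw [map_eq_image]
  exact congrArg Subtype.val hσ

/-! ### Complete semibipartite graphs -/

section CompleteSemibipartite

variable {r : ℕ} {A B : Finset ℕ}

/-- The complete semibipartite `r`-graph with parts `A` and `B`; it is used for disjoint parts. -/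
def completeSemibipartite (r : ℕ) (A B : Finset ℕ) : HGraph r :=
  ofEdges r (A ∪ B) {e ∈ powersetCard r (A ∪ B) | #(e ∩ A) = 1}

lemma mem_completeSemibipartite_edges {e : Finset ℕ} :
    e ∈ (completeSemibipartite r A B).edges ↔ (e ⊆ A ∪ B ∧ #e = r) ∧ #(e ∩ A) = 1 := by
  rw [completeSemibipartite, ofEdges, mem_filter, mem_filter, mem_powersetCard]
  exact and_iff_left_of_imp And.left

lemma semibipartite_completeSemibipartite : Semibipartite r (completeSemibipartite r A B) :=
  ⟨A, subset_union_left, fun _ he => (mem_completeSemibipartite_edges.1 he).2⟩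

lemma union_inter_eq_left_of_disjoint {p q : Finset ℕ} (hp : p ⊆ A) (hq : Disjoint q A) :
    (p ∪ q) ∩ A = p := by
  rw [union_inter_distrib_right, inter_eq_left.2 hp, disjoint_iff_inter_eq_empty.1 hq, union_empty]

lemma card_edges_completeSemibipartite (hr : 0 < r) (h : Disjoint A B) :
    #(completeSemibipartite r A B).edges = #A * (#B).choose (r - 1) := by
  rw [← card_powersetCard, ← Nat.choose_one_right #A, ← card_powersetCard, ← card_product]
  refine card_nbij' (fun e => (e ∩ A, e ∩ B)) (fun p => p.1 ∪ p.2) (fun e he => ?_)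
    (fun p hp => ?_) (fun e he => ?_) fun p hp => ?_
  · obtain ⟨⟨he, hcard⟩, hA⟩ := mem_completeSemibipartite_edges.1 he
    have hsum : #(e ∩ A ∪ e ∩ B) = #(e ∩ A) + #(e ∩ B) :=
      card_union_of_disjoint (h.mono inter_subset_right inter_subset_right)
    rw [← inter_union_distrib_left, inter_eq_left.2 he] at hsum
    exact mem_product.2 ⟨mem_powersetCard.2 ⟨inter_subset_right, hA⟩,
      mem_powersetCard.2 ⟨inter_subset_right, show #(e ∩ B) = r - 1 by omega⟩⟩
  · obtain ⟨⟨hpA, hp⟩, hqB, hq⟩ :=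
      (mem_product.1 hp).imp mem_powersetCard.1 mem_powersetCard.1
    refine mem_completeSemibipartite_edges.2 ⟨⟨union_subset_union hpA hqB, ?_⟩, ?_⟩
    · rw [card_union_of_disjoint (h.mono hpA hqB), hp, hq, Nat.add_sub_cancel' hr]
    · rwa [union_inter_eq_left_of_disjoint hpA (h.symm.mono_left hqB)]
  · refine (inter_union_distrib_left e A B).symm.trans ?_
    exact inter_eq_left.2 (mem_completeSemibipartite_edges.1 he).1.1
  · obtain ⟨⟨hpA, -⟩, hqB, -⟩ := (mem_product.1 hp).imp mem_powersetCard.1 mem_powersetCard.1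
    refine Prod.ext (union_inter_eq_left_of_disjoint hpA (h.symm.mono_left hqB)) ?_
    exact (congrArg (· ∩ B) (union_comm _ _)).trans
      (union_inter_eq_left_of_disjoint hqB (h.mono_left hpA))

lemma card_edges_le_semibipartiteMax_of_semibipartite {G : HGraph 3} (hG : Semibipartite 3 G) :
    #G.edges ≤ semibipartiteMax #G.verts := by
  obtain ⟨V, hV, hedges⟩ := hG
  have hsub : G.edges ⊆ (completeSemibipartite 3 V (G.verts \ V)).edges := fun e he =>
    mem_completeSemibipartite_edges.2
      ⟨⟨by rw [union_sdiff_of_subset hV]; exact G.edges_sub e he, G.edges_card e he⟩, hedges e he⟩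
  refine (card_le_card hsub).trans ?_
  rw [card_edges_completeSemibipartite three_pos disjoint_sdiff]
  exact mul_choose_le_semibipartiteMax
    ((add_comm _ _).trans (card_sdiff_add_card_eq_card hV))

lemma exists_semibipartite_card_edges_eq (m t : ℕ) :
    ∃ G : HGraph 3, #G.verts = m ∧ Disjoint G.verts (range t) ∧ Semibipartite 3 G ∧
      #G.edges = semibipartiteMax m := by
  obtain ⟨a, b, rfl, hmax⟩ := exists_semibipartiteMax_eq m
  have hdisj : Disjoint (Ico t (t + a)) (Ico (t + a) (t + a + b)) :=
    Ico_disjoint_Ico_consecutive _ _ _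
  refine ⟨completeSemibipartite 3 (Ico t (t + a)) (Ico (t + a) (t + a + b)), ?_, ?_,
    semibipartite_completeSemibipartite, ?_⟩
  · refine (card_union_of_disjoint hdisj).trans ?_
    rw [Nat.card_Ico, Nat.card_Ico, Nat.add_sub_cancel_left, Nat.add_sub_cancel_left]
  · refine (disjoint_union_left.2 ⟨?_, ?_⟩) <;>
    · rw [disjoint_left]
      simp only [mem_Ico, mem_range]
      omega
  · rw [hmax, card_edges_completeSemibipartite three_pos hdisj, Nat.card_Ico, Nat.card_Ico,
      Nat.add_sub_cancel_left, Nat.add_sub_cancel_left]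
    rfl

end CompleteSemibipartite

/-! ### The extremal problem for vertex-disjoint copies of `𝔽_{3,2}` -/

section ExtremalJoin

variable {r t m v : ℕ}

lemma join_completeOn_insert {H K : HGraph r} {L : Finset ℕ} (hr : 0 < r) (hv : v ∈ H.verts)
    (hdeg : H.deg v = (#H.verts - 1).choose (r - 1))
    (h : (completeOn r L).join K = H.deleteVert v) : (completeOn r (insert v L)).join K = H := by
  have hverts : insert v L ∪ K.verts = H.verts := by
    rw [insert_union, ← insert_erase hv]
    exact congrArg (insert v) (congrArg verts h)
  refine ext hverts (Finset.ext fun e => ?_)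
  by_cases hve : v ∈ e
  · rw [mem_join_completeOn hr, hverts]
    refine ⟨fun he => mem_edges_of_deg_eq hv hr hdeg he.1.1 he.1.2 hve, fun he => ?_⟩
    exact ⟨⟨H.edges_sub e he, H.edges_card e he⟩,
      .inl ⟨v, mem_inter.2 ⟨hve, mem_insert_self v L⟩⟩⟩
  · rw [mem_join_completeOn hr, insert_union, subset_insert_iff_of_notMem hve,
      inter_insert_of_notMem hve, ← mem_join_completeOn hr, h, mem_deleteVert_edges,
      and_iff_left hve]

/-- `H` is a join `K_t^3 ⋈ S_3(m)`, with arbitrary vertex labels. -/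
def IsExtremalJoin (t m : ℕ) (H : HGraph 3) : Prop :=
  ∃ (L : Finset ℕ) (K : HGraph 3), #L = t ∧ Disjoint K.verts L ∧ #K.verts = m ∧
    Semibipartite 3 K ∧ #K.edges = semibipartiteMax m ∧ (completeOn 3 L).join K = H

variable {H : HGraph 3}

lemma isExtremalJoin_zero (hH : Semibipartite 3 H)
    (hedges : #H.edges = semibipartiteMax #H.verts) : IsExtremalJoin 0 #H.verts H := by
  refine ⟨∅, H, card_empty, disjoint_empty_right _, rfl, hH, hedges,
    ext (empty_union _) (Finset.ext fun e => ?_)⟩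
  rw [mem_join_completeOn three_pos, inter_empty, empty_union,
    or_iff_right Finset.not_nonempty_empty]
  exact and_iff_right_of_imp fun he => ⟨H.edges_sub e he, H.edges_card e he⟩

lemma IsExtremalJoin.of_deleteVert (h : IsExtremalJoin t m (H.deleteVert v)) (hv : v ∈ H.verts)
    (hdeg : H.deg v = (#H.verts - 1).choose 2) : IsExtremalJoin (t + 1) m H := by
  obtain ⟨L, K, hL, hdisj, hcard, hK, hedges, hjoin⟩ := h
  have hverts : L ∪ K.verts = H.verts.erase v := congrArg verts hjoin
  have hv_notMem : v ∉ L ∪ K.verts := hverts ▸ notMem_erase v H.verts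
  rw [mem_union, not_or] at hv_notMem
  refine ⟨insert v L, K, ?_, disjoint_insert_right.2 ⟨hv_notMem.2, hdisj⟩, hcard, hK, hedges,
    join_completeOn_insert three_pos hv hdeg hjoin⟩
  rw [card_insert_of_notMem hv_notMem.1, hL]

lemma IsExtremalJoin.exists_iso (h : IsExtremalJoin t m H) :
    ∃ G : HGraph 3, #G.verts = m ∧ Disjoint G.verts (range t) ∧ Semibipartite 3 G ∧
      #G.edges = semibipartiteMax m ∧ H.Iso ((completeOn 3 (range t)).join G) := by
  obtain ⟨L, K, hL, hdisj, hcard, hK, hedges, rfl⟩ := h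
  obtain ⟨σ, hσ⟩ := exists_perm_map_eq (hL.trans (card_range t).symm)
  refine ⟨K.map σ.toEmbedding, (card_map _).trans hcard, ?_, semibipartite_map hK _,
    (card_map _).trans hedges, ?_⟩
  · rw [← hσ]
    exact (Finset.disjoint_map _).2 hdisj
  · rw [← hσ, ← map_join_completeOn three_pos]
    exact iso_map _ _

end ExtremalJoin

section LargeDegree

variable {r T : ℕ} {B : Finset ℕ}

lemma card_edges_le_card_edges_induce_add_mul {H : HGraph r} (hB : B ⊆ H.verts) (hr : 0 < r) :
    #H.edges ≤ #(H.induce (H.verts \ B)).edges + #B * #H.verts ^ (r - 1) := by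
  refine (card_edges_le_card_edges_induce_add H B).trans (Nat.add_le_add_left ?_ _)
  refine sum_le_card_nsmul _ _ _ fun u hu => (deg_le_choose (hB hu) hr).trans ?_
  exact (Nat.choose_le_pow _ _).trans (Nat.pow_le_pow_left (Nat.sub_le _ _) _)

lemma IsMatching.notMem_biUnion_of_deleteVert {F H : HGraph r} {k v : ℕ} {S : Fin k → Finset ℕ}
    (hS : F.IsMatching (H.deleteVert v) S) : v ∉ univ.biUnion S :=
  fun hv => notMem_erase v H.verts (hS.biUnion_subset hv)

lemma IsMatching.of_deleteVert {F H : HGraph r} {k v : ℕ} {S : Fin k → Finset ℕ}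
    (hS : F.IsMatching (H.deleteVert v) S) : F.IsMatching H S :=
  hS.mono (erase_subset _ _) fun _ he => (mem_deleteVert_edges.1 he).1

lemma card_edges_le_of_forall_deg_le {F H : HGraph r} {k M : ℕ} {D : ℝ}
    (hM : ∀ G : HGraph r, #G.verts = k → ¬ F.IsCopyIn G → #G.edges ≤ M)
    (hcard : #H.verts = k + #F.verts * T) (h : ¬ F.HasMatching H (T + 1))
    (hD : ∀ v ∈ H.verts, (H.deg v : ℝ) ≤ D) : (#H.edges : ℝ) ≤ M + #F.verts * T * D := by
  obtain ⟨B₀, hB₀, hB₀card, hfree⟩ := exists_card_le_not_isCopyIn_induce_sdiff h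
  obtain ⟨B, hBB, hB, hBcard⟩ := exists_subsuperset_card_eq hB₀ hB₀card (by omega)
  have hinduce : #(H.induce (H.verts \ B)).edges ≤ M := by
    have := card_verts_induce_sdiff hB
    exact hM _ (by omega) fun hcopy =>
      hfree (hcopy.induce_mono subset_rfl subset_rfl (sdiff_subset_sdiff subset_rfl hBB))
  calc (#H.edges : ℝ) ≤ #(H.induce (H.verts \ B)).edges + ∑ v ∈ B, (H.deg v : ℝ) :=
        mod_cast card_edges_le_card_edges_induce_add H B
    _ ≤ M + #B • D := by
        gcongr
        exact sum_le_card_nsmul _ _ _ fun v hv => hD v (hB hv)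
    _ = M + #F.verts * T * D := by
        rw [hBcard, nsmul_eq_mul, Nat.cast_mul]

variable {H : HGraph 3} {k m v : ℕ}

lemma six_mul_card_edges_add_deg_le (hH : ¬ F32.IsCopyIn H) (hv : v ∈ H.verts) {θ : ℝ}
    (hθ : 0 ≤ θ) : 6 * (#H.edges : ℝ) + 6 * θ * H.deg v ≤ 4 / 9 * (#H.verts + θ) ^ 3 := by
  have h := add_mul_linkWeight_le_of_weight_le
    (fun _ hq => (f32Free_toTripleSystem hH).weight_le hq) (p := 1) (fun _ => zero_le_one)
    ⟨v, hv⟩ hθ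
  rw [weight_one_toTripleSystem, linkWeight_one_toTripleSystem] at h
  simp only [Pi.one_apply, sum_const, card_univ, Fintype.card_coe, nsmul_eq_mul, mul_one] at h
  linarith

lemma four_ninths_mul_pow_three_lt {m T : ℝ} (hT₀ : 0 ≤ T) (hm : 10 ^ 5 ≤ m)
    (hT : 10 ^ 5 * T ≤ m) :
    4 / 9 * (m + T + (m + T) / 10) ^ 3 <
      6 * (2 / 27 * m ^ 3 - m ^ 2 - 5 * T * (m + T) ^ 2) +
        6 * ((m + T) / 10) * (26 / 100 * (m + T) ^ 2 - 5 * T * (m + T)) := by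
  obtain ⟨n, hn⟩ : ∃ n, n = m + T := ⟨_, rfl⟩
  rw [← hn]
  have hn₀ : 0 < n := by linarith
  have hcube : ((1 - 1 / 10 ^ 5) * n) ^ 3 ≤ m ^ 3 :=
    pow_le_pow_left₀ (by positivity) (by linarith) 3
  have hsq : m ^ 2 ≤ 1 / 10 ^ 5 * n * n ^ 2 := by
    have hmn : m ^ 2 ≤ n ^ 2 := pow_le_pow_left₀ (by linarith) (by linarith) 2
    exact hmn.trans (le_mul_of_one_le_left (by positivity) (by linarith))
  have hTn : T * n ^ 2 ≤ 1 / 10 ^ 5 * n * n ^ 2 := by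
    gcongr
    linarith
  have hn₃ : 0 < n ^ 3 := by positivity
  nlinarith

/-- A vertex of degree at least `0.26 n²` makes the Lagrangian bound fail, even after the removal
of any `5 T` other vertices. -/
lemma isCopyIn_F32_induce_sdiff (hm : 10 ^ 5 ≤ m) (hT : 10 ^ 5 * T ≤ m)
    (hcard : #H.verts = m + T) (hedges : semibipartiteMax m ≤ #H.edges) (hB : B ⊆ H.verts)
    (hBcard : #B ≤ 5 * T) (hv : v ∈ H.verts) (hvB : v ∉ B)
    (hdeg : 26 / 100 * (#H.verts : ℝ) ^ 2 ≤ H.deg v) :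
    F32.IsCopyIn (H.induce (H.verts \ B)) := by
  by_contra hfree
  have hv' : v ∈ (H.induce (H.verts \ B)).verts := mem_inter.2 ⟨hv, mem_sdiff.2 ⟨hv, hvB⟩⟩
  have hlagrangian := six_mul_card_edges_add_deg_le hfree hv' (θ := #H.verts / 10) (by positivity)
  have hverts : (#(H.induce (H.verts \ B)).verts : ℝ) ≤ #H.verts :=
    mod_cast card_le_card inter_subset_left
  have hedges_induce : (#H.edges : ℝ) ≤
      #(H.induce (H.verts \ B)).edges + 5 * T * #H.verts ^ 2 := by
    exact_mod_cast (card_edges_le_card_edges_induce_add_mul hB three_pos).trans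
      (by gcongr)
  have hdeg_induce : (H.deg v : ℝ) ≤ (H.induce (H.verts \ B)).deg v + 5 * T * #H.verts := by
    have h := deg_le_deg_induce_add H hvB
    rw [Nat.choose_one_right] at h
    exact_mod_cast h.trans (by gcongr)
  have hmax : 2 / 27 * (m : ℝ) ^ 3 - m ^ 2 ≤ #H.edges :=
    (le_semibipartiteMax m).trans (mod_cast hedges)
  have hnum := four_ninths_mul_pow_three_lt (m := m) (T := T) T.cast_nonneg (mod_cast hm)
    (mod_cast hT)
  have hcard' : (#H.verts : ℝ) = m + T := mod_cast hcard
  rw [← hcard'] at hnum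
  refine hnum.not_ge ((?_ : _ ≤ _).trans (hlagrangian.trans ?_))
  · gcongr <;> linarith
  · gcongr

lemma not_hasMatching_deleteVert (hm : 10 ^ 5 ≤ m) (hT : 10 ^ 5 * T ≤ m)
    (hcard : #H.verts = m + T) (hedges : semibipartiteMax m ≤ #H.edges) (hv : v ∈ H.verts)
    (hdeg : 26 / 100 * (#H.verts : ℝ) ^ 2 ≤ H.deg v) (h : ¬ F32.HasMatching H (T + 1)) :
    ¬ F32.HasMatching (H.deleteVert v) T := by
  rintro ⟨S, hS⟩
  have hS : F32.IsMatching (H.deleteVert v) S := hS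
  exact h (hS.of_deleteVert.hasMatching_succ (isCopyIn_F32_induce_sdiff hm hT hcard hedges
    hS.of_deleteVert.biUnion_subset hS.card_biUnion.le hv hS.notMem_biUnion_of_deleteVert hdeg))

lemma semibipartiteMax_add_mul_le (k j : ℕ) :
    (semibipartiteMax k : ℝ) + j * (2 / 9 * (k : ℝ) ^ 2 - 3 * (k + j)) ≤
      semibipartiteMax (k + j) := by
  induction j with
  | zero => simp
  | succ j ih =>
    have hstep := semibipartiteMax_add_le_succ (k + j)
    rw [← Nat.add_assoc]
    push_cast at hstep ih ⊢
    nlinarith [mul_nonneg (Nat.cast_nonneg (α := ℝ) k) (Nat.cast_nonneg (α := ℝ) j)]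

lemma semibipartiteMax_add_mul_sq_lt (hT₀ : 0 < T) (hm : 10 ^ 5 ≤ k + 4 * T)
    (hT : 10 ^ 5 * T ≤ k + 4 * T) :
    (semibipartiteMax k : ℝ) + 5 * T * (26 / 100 * ((k : ℝ) + 5 * T) ^ 2) <
      semibipartiteMax (k + 4 * T) + T * (k + 4 * T).choose 2 := by
  have hmax := semibipartiteMax_add_mul_le k (4 * T)
  rw [Nat.cast_choose_two]
  obtain ⟨m, hm_eq⟩ : ∃ m : ℝ, m = k + 4 * T := ⟨_, rfl⟩
  have hT₁ : (1 : ℝ) ≤ T := mod_cast hT₀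
  have hm : (10 : ℝ) ^ 5 ≤ m := by rw [hm_eq]; exact_mod_cast hm
  have hT : (10 : ℝ) ^ 5 * T ≤ m := by rw [hm_eq]; exact_mod_cast hT
  push_cast at hmax ⊢
  rw [← hm_eq] at hmax ⊢
  have hk : ((1 - 4 / 10 ^ 5) * m) ^ 2 ≤ (k : ℝ) ^ 2 :=
    pow_le_pow_left₀ (mul_nonneg (by norm_num) (by linarith)) (by linarith) 2
  have hn : ((k : ℝ) + 5 * T) ^ 2 ≤ ((1 + 1 / 10 ^ 5) * m) ^ 2 :=
    pow_le_pow_left₀ (by positivity) (by linarith) 2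
  have hm₂ : m ≤ 1 / 10 ^ 5 * m ^ 2 := by nlinarith
  have hpos : 0 < 4 * (2 / 9 * (k : ℝ) ^ 2 - 3 * m) + m * (m - 1) / 2 -
      5 * (26 / 100 * ((k : ℝ) + 5 * T) ^ 2) := by
    nlinarith [pow_pos (show 0 < m by linarith) 2]
  linarith [mul_pos (zero_lt_one.trans_le hT₁) hpos]

lemma exists_le_deg (hm : 10 ^ 5 ≤ m) (hT₀ : 0 < T) (hT : 10 ^ 5 * T ≤ m)
    (hturan : ∀ G : HGraph 3, #G.verts = m - 4 * T → ¬ F32.IsCopyIn G →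
      #G.edges ≤ semibipartiteMax #G.verts)
    (hcard : #H.verts = m + T) (h : ¬ F32.HasMatching H (T + 1))
    (hedges : semibipartiteMax m + T * m.choose 2 ≤ #H.edges) :
    ∃ v ∈ H.verts, 26 / 100 * (#H.verts : ℝ) ^ 2 ≤ H.deg v := by
  obtain ⟨k, rfl⟩ : ∃ k, m = k + 4 * T := ⟨m - 4 * T, by omega⟩
  by_contra! hdeg
  have hcard' : #H.verts = k + #F32.verts * T := by
    rw [hcard, show #F32.verts = 5 from rfl]
    ring
  have hle := card_edges_le_of_forall_deg_le (M := semibipartiteMax k)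
    (fun G hG hfree => hG ▸ hturan G (by omega) hfree) hcard' h fun v hv => (hdeg v hv).le
  have hlt := semibipartiteMax_add_mul_sq_lt hT₀ hm hT
  have hedges : (semibipartiteMax (k + 4 * T) + T * (k + 4 * T).choose 2 : ℝ) ≤ #H.edges :=
    mod_cast hedges
  rw [hcard'] at hle
  rw [show #F32.verts = 5 from rfl] at hle
  push_cast at hle
  linarith

end LargeDegree

section Extremal

variable {t m v : ℕ} {H : HGraph 3}

lemma not_isCopyIn_of_not_hasMatching_one {r : ℕ} {F G : HGraph r} (h : ¬ F.HasMatching G 1) :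
    ¬ F.IsCopyIn G := by
  obtain ⟨B, -, hB, hfree⟩ := exists_card_le_not_isCopyIn_induce_sdiff (t := 0) h
  rw [mul_zero, Nat.le_zero, card_eq_zero] at hB
  rwa [hB, sdiff_empty, induce_verts_self] at hfree

lemma choose_three_add_mul_choose_two_le (m t : ℕ) :
    m.choose 3 + t * m.choose 2 ≤ (m + t).choose 3 := by
  induction t with
  | zero => simp
  | succ t ih =>
    have hpascal : (m + (t + 1)).choose 3 = (m + t).choose 2 + (m + t).choose 3 :=
      Nat.choose_succ_succ' (m + t) 2
    have hmono : m.choose 2 ≤ (m + t).choose 2 := Nat.choose_le_choose 2 (Nat.le_add_right m t)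
    rw [Nat.succ_mul]
    omega

/-- Every `(m + t)`-vertex graph without `t + 1` disjoint copies of `𝔽_{3,2}` has at most as many
edges as `K_t^3 ⋈ S_3(m)`, with equality only for this join. The edge count is written without
subtraction. -/
def JoinIsExtremal (t m : ℕ) : Prop :=
  ∀ H : HGraph 3, #H.verts = m + t → ¬ F32.HasMatching H (t + 1) →
    #H.edges + m.choose 3 ≤ semibipartiteMax m + (m + t).choose 3 ∧
      (#H.edges + m.choose 3 = semibipartiteMax m + (m + t).choose 3 → IsExtremalJoin t m H)

lemma joinIsExtremal_zero (hturan : ∀ H : HGraph 3, #H.verts = m → ¬ F32.IsCopyIn H →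
    #H.edges ≤ semibipartiteMax #H.verts ∧
      (#H.edges = semibipartiteMax #H.verts → Semibipartite 3 H)) : JoinIsExtremal 0 m := by
  rintro H rfl h
  obtain ⟨hle, heq⟩ := hturan H rfl (not_isCopyIn_of_not_hasMatching_one h)
  refine ⟨Nat.add_le_add_right hle _, fun hedges => ?_⟩
  have hedges := Nat.add_right_cancel hedges
  exact isExtremalJoin_zero (heq hedges) hedges

lemma JoinIsExtremal.succ (ih : JoinIsExtremal t m) (hm : 10 ^ 5 ≤ m) (ht : 10 ^ 5 * (t + 1) ≤ m)
    (hturan : ∀ G : HGraph 3, #G.verts = m - 4 * (t + 1) → ¬ F32.IsCopyIn G →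
      #G.edges ≤ semibipartiteMax #G.verts) : JoinIsExtremal (t + 1) m := by
  intro H hcard h
  have hpascal : (m + (t + 1)).choose 3 = (m + t).choose 2 + (m + t).choose 3 :=
    Nat.choose_succ_succ' (m + t) 2
  by_cases hlt : #H.edges + m.choose 3 < semibipartiteMax m + (m + (t + 1)).choose 3
  · exact ⟨hlt.le, fun heq => absurd heq hlt.ne⟩
  have hedges : semibipartiteMax m + (t + 1) * m.choose 2 ≤ #H.edges := by
    have := choose_three_add_mul_choose_two_le m (t + 1)
    omega
  obtain ⟨v, hv, hdeg⟩ := exists_le_deg hm t.succ_pos ht hturan hcard h hedges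
  have hdelete := not_hasMatching_deleteVert hm ht hcard (le_of_add_le_left hedges) hv hdeg h
  have hcard_pred : #H.verts - 1 = m + t := by rw [hcard, ← Nat.add_assoc, Nat.add_sub_cancel]
  have hcard_delete : #(H.deleteVert v).verts = m + t := (card_erase_of_mem hv).trans hcard_pred
  obtain ⟨hle, heq⟩ := ih _ hcard_delete hdelete
  have hsum := card_deleteVert_edges_add_deg H v
  have hdeg_le : H.deg v ≤ (m + t).choose 2 := hcard_pred ▸ deg_le_choose hv three_pos
  refine ⟨by omega, fun hH => (heq (by omega)).of_deleteVert hv ?_⟩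
  rw [hcard_pred]
  omega

theorem exists_forall_joinIsExtremal :
    ∃ N, ∀ m t : ℕ, N ≤ m → 10 ^ 5 * t ≤ m → JoinIsExtremal t m := by
  obtain ⟨N, hN⟩ := exists_forall_card_edges_le_semibipartiteMax
  refine ⟨2 * N + 10 ^ 5, fun m t hm => ?_⟩
  induction t with
  | zero => exact fun _ => joinIsExtremal_zero fun H hH => hN H (by omega)
  | succ t ih =>
    exact fun ht => (ih (by omega)).succ (by omega) ht fun G hG hfree => (hN G (by omega) hfree).1

lemma card_verts_join_completeOn_range {G : HGraph 3} (hG : #G.verts = m)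
    (hdisj : Disjoint G.verts (range t)) : #((completeOn 3 (range t)).join G).verts = m + t := by
  rw [card_verts_join_completeOn hdisj, hG, card_range]

lemma card_edges_join_completeOn_range {G : HGraph 3} (hG : #G.verts = m)
    (hdisj : Disjoint G.verts (range t)) (hedges : #G.edges = semibipartiteMax m) :
    #((completeOn 3 (range t)).join G).edges + m.choose 3 =
      semibipartiteMax m + (m + t).choose 3 := by
  have h := card_edges_join_completeOn three_pos hdisj
  rwa [hG, hedges, card_range] at h

lemma not_hasMatching_join_completeOn_range {G : HGraph 3} (hG : Semibipartite 3 G) :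
    ¬ F32.HasMatching ((completeOn 3 (range t)).join G) (t + 1) := by
  have h := not_hasMatching_join_completeOn three_pos (L := range t)
    (not_isCopyIn_F32_of_semibipartite hG)
  rwa [card_range] at h

lemma JoinIsExtremal.exMatchN_add_choose_eq (h : JoinIsExtremal t m) :
    exMatchN 3 (m + t) t F32 + m.choose 3 = semibipartiteMax m + (m + t).choose 3 := by
  obtain ⟨G, hG, hdisj, hsemi, hedges⟩ := exists_semibipartite_card_edges_eq m t
  have hjoin := card_edges_join_completeOn_range hG hdisj hedges
  rw [← hjoin]
  congr 1
  refine IsGreatest.csSup_eq ⟨⟨_, card_verts_join_completeOn_range hG hdisj,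
    not_hasMatching_join_completeOn_range hsemi, rfl⟩, ?_⟩
  rintro _ ⟨H, hH, hfree, rfl⟩
  exact Nat.le_of_add_le_add_right (hjoin ▸ (h H hH hfree).1)

lemma JoinIsExtremal.isExtremalMatchingFree_iff (h : JoinIsExtremal t m) :
    IsExtremalMatchingFree 3 (m + t) t F32 H ↔
      ∃ G : HGraph 3, #G.verts = m ∧ Disjoint G.verts (range t) ∧ Semibipartite 3 G ∧
        #G.edges = semibipartiteMax m ∧ H.Iso ((completeOn 3 (range t)).join G) := by
  constructor
  · rintro ⟨hcard, hfree, hedges⟩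
    exact ((h H hcard hfree).2 (hedges ▸ h.exMatchN_add_choose_eq)).exists_iso
  · rintro ⟨G, hG, hdisj, hsemi, hedges, hiso⟩
    refine ⟨hiso.card_verts_eq.trans (card_verts_join_completeOn_range hG hdisj), fun hH =>
      not_hasMatching_join_completeOn_range hsemi (hiso.hasMatching hH), ?_⟩
    refine Nat.add_right_cancel (hiso.card_edges_eq ▸ ?_ : #H.edges + m.choose 3 = _)
    rw [card_edges_join_completeOn_range hG hdisj hedges, h.exMatchN_add_choose_eq]

lemma card_edges_eq_semibipartiteMax_iff {G : HGraph 3} (hG : #G.verts = m)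
    (hsemi : Semibipartite 3 G) :
    #G.edges = semibipartiteMax m ↔
      ∀ G' : HGraph 3, #G'.verts = m → Semibipartite 3 G' → #G'.edges ≤ #G.edges := by
  refine ⟨fun hedges G' hG' hsemi' => ?_, fun hmax => ?_⟩
  · rw [hedges, ← hG']
    exact card_edges_le_semibipartiteMax_of_semibipartite hsemi'
  · obtain ⟨G', hG', -, hsemi', hedges⟩ := exists_semibipartite_card_edges_eq m 0
    exact (hG ▸ card_edges_le_semibipartiteMax_of_semibipartite hsemi).antisymm
      (hedges ▸ hmax G' hG' hsemi')

end Extremal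

end HGraph

/-- the density Corrádi–Hajnal theorem for `𝔽_{3,2}`; `S_3(n−t)`
is characterized as a maximum semibipartite 3-graph on `n − t` vertices. -/
theorem statement_16 :
    ∃ N₀ : ℕ, ∃ c : ℝ, 0 < c ∧ ∀ n : ℕ, N₀ ≤ n → ∀ t : ℕ, (t : ℝ) ≤ c * n →
      ∀ H : HGraph 3, IsExtremalMatchingFree 3 n t F32 H ↔
        ∃ G : HGraph 3, G.verts.card = n - t ∧ Disjoint G.verts (Finset.range t) ∧
          Semibipartite 3 G ∧
          (∀ G' : HGraph 3, G'.verts.card = n - t → Semibipartite 3 G' →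
            G'.edges.card ≤ G.edges.card) ∧
          H.Iso ((completeOn 3 (Finset.range t)).join G) := by
  obtain ⟨N, hN⟩ := HGraph.exists_forall_joinIsExtremal
  refine ⟨2 * N, 1 / 10 ^ 6, by norm_num, fun n hn t ht H => ?_⟩
  have htn : 10 ^ 6 * t ≤ n := by
    have : (10 : ℝ) ^ 6 * t ≤ n := by linarith
    exact_mod_cast this
  obtain ⟨m, rfl⟩ : ∃ m, n = m + t := ⟨n - t, by omega⟩
  have hjoin := hN m t (by omega) (by omega)
  rw [hjoin.isExtremalMatchingFree_iff, Nat.add_sub_cancel]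
  refine exists_congr fun G => and_congr_right fun hG => and_congr_right fun _ =>
    and_congr_right fun hsemi => and_congr_left fun _ => ?_
  exact HGraph.card_edges_eq_semibipartiteMax_iff hG hsemi

end DensityCH
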